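/- Let k and t be positive integers with k ≥ 4. There exists n₀ = n₀(k,t) such that for all integers n ≥ n₀, the maximum number of edges in a k-uniform hypergraph on n vertices containing no copy of the k-uniform linear path P^{(k)}_{2t+1} of length 2t+1 equals C(n−1,k−1) + C(n−2,k−1) + … + C(n−t,k−1). -/

import Mathlib

open Finset

/-- The family `F` of k-sets contains a k-uniform linear path of length ℓ:
distinct members `P 0, …, P (ℓ-1)` with consecutive members meeting in exactly one
vertex and non-consecutive members disjoint. -/
def ContainsLinearPath (k ℓ : ℕ) {n : ℕ} (F : Finset (Finset (Fin n))) : Prop :=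
  ∃ P : Fin ℓ → Finset (Fin n), Function.Injective P ∧
    (∀ i, P i ∈ F) ∧ (∀ i, (P i).card = k) ∧
    (∀ i j : Fin ℓ, (i : ℕ) + 1 = (j : ℕ) → (P i ∩ P j).card = 1) ∧
    (∀ i j : Fin ℓ, (i : ℕ) + 1 < (j : ℕ) → P i ∩ P j = ∅)

set_option linter.unusedSectionVars false

section LP
variable {V : Type*} [DecidableEq V]

def Ker (s : ℕ) (H : Finset (Finset V)) (A : Finset V) : Prop :=
  ∀ S : Finset V, S.card ≤ s → ∃ E ∈ H, A ⊆ E ∧ ∀ x ∈ E, x ∈ S → x ∈ A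

lemma Ker.mono {s : ℕ} {H H' : Finset (Finset V)} {A : Finset V} (h : Ker s H A) (hH : H ⊆ H') :
    Ker s H' A := by
  intro S hS
  obtain ⟨E, hE, h1⟩ := h S hS
  exact ⟨E, hH hE, h1⟩

lemma Ker.of_mem {s : ℕ} {H : Finset (Finset V)} {A : Finset V} (h : A ∈ H) : Ker s H A :=
  fun _ _ => ⟨A, h, Subset.refl _, fun _ hx _ => hx⟩

def HasPath (m : ℕ) (H : Finset (Finset V)) : Prop :=
  ∃ P : ℕ → Finset V, (∀ i < m, P i ∈ H) ∧ (∀ i, i + 1 < m → (P i ∩ P (i+1)).card = 1) ∧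
    (∀ i j, i + 1 < j → j < m → P i ∩ P j = ∅)

lemma HasPath.mono {m : ℕ} {H H' : Finset (Finset V)} (h : HasPath m H) (hH : H ⊆ H') :
    HasPath m H' := by
  obtain ⟨P, h1, h2⟩ := h
  exact ⟨P, fun i hi => hH (h1 i hi), h2⟩

lemma HasPath.contains {k m n : ℕ} {H : Finset (Finset (Fin n))} (hk : 2 ≤ k)
    (hH : ∀ A ∈ H, A.card = k) (h : HasPath m H) :
    ∃ P : Fin m → Finset (Fin n), Function.Injective P ∧
    (∀ i, P i ∈ H) ∧ (∀ i, (P i).card = k) ∧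
    (∀ i j : Fin m, (i : ℕ) + 1 = (j : ℕ) → (P i ∩ P j).card = 1) ∧
    (∀ i j : Fin m, (i : ℕ) + 1 < (j : ℕ) → P i ∩ P j = ∅) := by
  obtain ⟨P, h1, h2, h3⟩ := h
  have key : ∀ i j, i < j → j < m → P i ≠ P j := by
    intro i j hij hj he
    have hc := hH _ (h1 j hj)
    rcases Nat.lt_or_ge (i+1) j with h | h
    · have := h3 i j h hj
      rw [he, inter_self] at this
      rw [this] at hc; simp at hc; omega
    · have : j = i + 1 := by omega
      subst this
      have := h2 i hj
      rw [he, inter_self] at this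
      omega
  refine ⟨fun i => P i, ?_, fun i => h1 _ i.2, fun i => hH _ (h1 _ i.2), ?_, ?_⟩
  · intro i j hij
    rcases lt_trichotomy (i:ℕ) j with h | h | h
    · exact absurd hij (key _ _ h j.2)
    · exact Fin.ext h
    · exact absurd hij.symm (key _ _ h i.2)
  · intro i j hij
    have := h2 i (by omega)
    rw [hij] at this
    exact this
  · intro i j hij
    exact h3 _ _ hij j.2

lemma expand {k s m : ℕ} {H : Finset (Finset V)} (hH : ∀ E ∈ H, E.card = k) (A : ℕ → Finset V)
    (hA : ∀ i < m, Ker s H (A i)) (hs : 2 * m * k ≤ s) :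
    ∃ E : ℕ → Finset V, (∀ i < m, E i ∈ H ∧ A i ⊆ E i) ∧
      ∀ i < m, ∀ j < m, i ≠ j → E i ∩ E j = A i ∩ A j := by
  have hAk : ∀ i < m, (A i).card ≤ k := by
    intro i hi
    obtain ⟨E, hE, h1, _⟩ := hA i hi ∅ (by simp)
    rw [← hH E hE]; exact card_le_card h1
  have key : ∀ r ≤ m, ∃ E : ℕ → Finset V, (∀ i < r, E i ∈ H ∧ A i ⊆ E i ∧
      ∀ j < m, E i ∩ A j ⊆ A i) ∧ ∀ i < r, ∀ j < i, E i ∩ E j ⊆ A i ∩ A j := by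
    intro r
    induction r with
    | zero => intro _; exact ⟨fun _ => ∅, by simp, by simp⟩
    | succ r ih =>
      intro hr
      obtain ⟨E, h1, h2⟩ := ih (by omega)
      obtain ⟨F, hF, hF1, hF2⟩ := hA r (by omega)
        ((range m).biUnion A ∪ (range r).biUnion E) (by
          refine (card_union_le _ _).trans ?_
          have a1 : ((range m).biUnion A).card ≤ m * k := by
            simpa using card_biUnion_le_card_mul (range m) A k (by simpa using hAk)
          have a2 : ((range r).biUnion E).card ≤ r * k := by
            simpa using card_biUnion_le_card_mul (range r) E k (by
              intro i hi; exact (hH _ (h1 i (by simpa using hi)).1).le)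
          have : r * k ≤ m * k := Nat.mul_le_mul_right _ (by omega)
          have e : 2 * m * k = m * k + m * k := by ring
          omega)
      refine ⟨Function.update E r F, ?_, ?_⟩
      · intro i hi
        rcases Nat.lt_succ_iff_lt_or_eq.1 hi with h | h
        · rw [Function.update_of_ne (by omega)]; exact h1 i h
        · subst h
          rw [Function.update_self]
          refine ⟨hF, hF1, ?_⟩
          intro j hj x hx
          rw [mem_inter] at hx
          exact hF2 x hx.1 (mem_union_left _ (mem_biUnion.2 ⟨j, by simpa using hj, hx.2⟩))
      · intro i hi j hj
        rcases Nat.lt_succ_iff_lt_or_eq.1 hi with h | h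
        · rw [Function.update_of_ne (by omega), Function.update_of_ne (by omega)]; exact h2 i h j hj
        · subst h
          rw [Function.update_self, Function.update_of_ne (by omega)]
          intro x hx
          rw [mem_inter] at hx
          have hxA : x ∈ A i :=
            hF2 x hx.1 (mem_union_right _ (mem_biUnion.2 ⟨j, by simpa using hj, hx.2⟩))
          rw [mem_inter]
          exact ⟨hxA, (h1 j hj).2.2 i (by omega) (mem_inter.2 ⟨hx.2, hxA⟩)⟩
  obtain ⟨E, h1, h2⟩ := key m le_rfl
  refine ⟨E, fun i hi => ⟨(h1 i hi).1, (h1 i hi).2.1⟩, ?_⟩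
  intro i hi j hj hij
  apply Subset.antisymm
  · rcases lt_or_gt_of_ne hij with h | h
    · rw [inter_comm, inter_comm (A i)]; exact h2 j hj i h
    · exact h2 i hi j h
  · exact inter_subset_inter (h1 i hi).2.1 (h1 j hj).2.1

lemma kerPath {k s m : ℕ} {H : Finset (Finset V)} (hH : ∀ E ∈ H, E.card = k) (A : ℕ → Finset V)
    (hA : ∀ i < m, Ker s H (A i)) (hs : 2 * m * k ≤ s)
    (h1 : ∀ i, i + 1 < m → (A i ∩ A (i+1)).card = 1)
    (h2 : ∀ i j, i + 1 < j → j < m → A i ∩ A j = ∅) : HasPath m H := by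
  obtain ⟨E, hE, hE2⟩ := expand hH A hA hs
  refine ⟨E, fun i hi => (hE i hi).1, ?_, ?_⟩
  · intro i hi
    rw [hE2 i (by omega) _ hi (by omega)]; exact h1 i hi
  · intro i j hij hj
    rw [hE2 i (by omega) _ hj (by omega)]; exact h2 i j hij hj

/-- kernel graph -/
def KAdj (s : ℕ) (H : Finset (Finset V)) (x y : V) : Prop := x ≠ y ∧ Ker s H {x, y}

lemma KAdj.symm {s : ℕ} {H : Finset (Finset V)} {x y : V} (h : KAdj s H x y) : KAdj s H y x := by
  refine ⟨h.1.symm, ?_⟩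
  have := h.2
  rwa [pair_comm] at this

lemma graphPath {k s m : ℕ} {H : Finset (Finset V)} (hH : ∀ E ∈ H, E.card = k) (v : ℕ → V)
    (hs : 2 * m * k ≤ s) (hv : ∀ i ≤ m, ∀ j ≤ m, v i = v j → i = j)
    (hadj : ∀ i < m, KAdj s H (v i) (v (i+1))) : HasPath m H := by
  refine kerPath hH (fun i => {v i, v (i+1)}) (fun i hi => (hadj i hi).2) hs ?_ ?_
  · intro i hi
    rw [card_eq_one]
    refine ⟨v (i+1), ?_⟩
    ext x
    simp only [mem_inter, mem_insert, mem_singleton]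
    constructor
    · rintro ⟨h1 | h1, h2 | h2⟩
      · exact h2
      · subst h1; have := hv i (by omega) (i+1+1) (by omega) h2; omega
      · exact h1
      · exact h1
    · intro h; exact ⟨Or.inr h, Or.inl h⟩
  · intro i j hij hj
    ext x
    simp only [mem_inter, mem_insert, mem_singleton, notMem_empty, iff_false]
    rintro ⟨rfl | rfl, h2 | h2⟩
    · have := hv _ (by omega) _ (by omega) h2; omega
    · have := hv _ (by omega) _ (by omega) h2; omega
    · have := hv _ (by omega) _ (by omega) h2; omega
    · have := hv _ (by omega) _ (by omega) h2; omega

/-- an edge followed by a kernel path starting in it -/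
lemma graphPath' {k s m : ℕ} {H : Finset (Finset V)} (hH : ∀ E ∈ H, E.card = k) (v : ℕ → V)
    {E : Finset V} (hE : E ∈ H) (h0 : v 0 ∈ E) (hE' : ∀ i ≤ m, 1 ≤ i → v i ∉ E)
    (hs : 2 * (m+1) * k ≤ s) (hv : ∀ i ≤ m, ∀ j ≤ m, v i = v j → i = j)
    (hadj : ∀ i < m, KAdj s H (v i) (v (i+1))) : HasPath (m+1) H := by
  refine kerPath hH (fun i => if i = 0 then E else {v (i-1), v i}) ?_ hs ?_ ?_
  · intro i hi
    rcases Nat.eq_zero_or_pos i with h | h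
    · subst h; simpa using Ker.of_mem hE
    · have := (hadj (i-1) (by omega)).2
      rw [if_neg (by omega)]
      rwa [Nat.sub_add_cancel h] at this
  · intro i hi
    rw [card_eq_one]
    refine ⟨v i, ?_⟩
    ext x
    rcases Nat.eq_zero_or_pos i with h | h
    · subst h
      simp only [if_true, mem_inter, mem_singleton]
      simp only [zero_add, one_ne_zero, if_false, mem_insert, mem_singleton, Nat.sub_self]
      constructor
      · rintro ⟨h1, h2 | h2⟩
        · exact h2
        · subst h2; exact absurd h1 (hE' 1 (by omega) le_rfl)
      · rintro rfl; exact ⟨h0, Or.inl rfl⟩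
    · rw [if_neg (by omega), if_neg (by omega), Nat.add_sub_cancel]
      simp only [mem_inter, mem_insert, mem_singleton]
      constructor
      · rintro ⟨h1 | h1, h2 | h2⟩
        · exact h2
        · subst h1; have := hv _ (by omega) _ (by omega) h2; omega
        · exact h1
        · exact h1
      · intro h; exact ⟨Or.inr h, Or.inl h⟩
  · intro i j hij hj
    ext x
    rw [if_neg (by omega : j ≠ 0)]
    rcases Nat.eq_zero_or_pos i with h | h
    · subst h
      simp only [if_true, mem_inter, mem_insert, mem_singleton, notMem_empty, iff_false]
      rintro ⟨h1, rfl | rfl⟩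
      · exact hE' _ (by omega) (by omega) h1
      · exact hE' _ (by omega) (by omega) h1
    · rw [if_neg (by omega)]
      simp only [mem_inter, mem_insert, mem_singleton, notMem_empty, iff_false]
      rintro ⟨rfl | rfl, h2 | h2⟩
      · have := hv _ (by omega) _ (by omega) h2; omega
      · have := hv _ (by omega) _ (by omega) h2; omega
      · have := hv _ (by omega) _ (by omega) h2; omega
      · have := hv _ (by omega) _ (by omega) h2; omega

lemma exists_enum (S : Finset V) (hS : S.Nonempty) (m : ℕ) (hm : m ≤ S.card) :
    ∃ f : ℕ → V, (∀ i, f i ∈ S) ∧ ∀ i < m, ∀ j < m, f i = f j → i = j := by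
  obtain ⟨a, ha⟩ := hS
  let e := S.equivFin.symm
  refine ⟨fun i => if h : i < S.card then (e ⟨i, h⟩ : V) else a, ?_, ?_⟩
  · intro i
    dsimp only
    split_ifs
    · exact (e _).2
    · exact ha
  · intro i hi j hj hij
    dsimp only at hij
    rw [dif_pos (by omega), dif_pos (by omega)] at hij
    have := e.injective (Subtype.ext hij)
    simpa using this

/-- alternating path -/
lemma altPath {r : V → V → Prop} (hirr : ∀ x, ¬ r x x) (hsym : ∀ x y, r x y → r y x)
    (f g : ℕ → V) (a b : ℕ) (hf : ∀ i < a, ∀ j < a, f i = f j → i = j)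
    (hg : ∀ i < b, ∀ j < b, g i = g j → i = j) (hr : ∀ i j, r (f i) (g j)) (m : ℕ)
    (hm : m < 2 * a) (hm' : m < 2 * b + 1) :
    ∃ v : ℕ → V, v 0 = f 0 ∧ (∀ i, v i = f (i/2) ∨ v i = g (i/2)) ∧
      (∀ i ≤ m, 1 ≤ i → (v i = f (i/2) ∧ 1 ≤ i/2 ∧ i/2 < a) ∨ v i = g (i/2)) ∧
      (∀ i ≤ m, ∀ j ≤ m, v i = v j → i = j) ∧ ∀ i < m, r (v i) (v (i+1)) := by
  have hne : ∀ i j, f i ≠ g j := by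
    intro i j h
    have := hr i j
    rw [h] at this
    exact hirr _ this
  refine ⟨fun i => if i % 2 = 0 then f (i/2) else g (i/2), by simp, ?_, ?_, ?_, ?_⟩
  · intro i; dsimp only; split_ifs <;> simp
  · intro i hi h1; dsimp only; split_ifs
    · left; refine ⟨rfl, by omega, by omega⟩
    · right; rfl
  · intro i hi j hj
    dsimp only
    split_ifs with h1 h2 h2
    · intro h; have := hf _ (by omega) _ (by omega) h; omega
    · intro h; exact absurd h (hne _ _)
    · intro h; exact absurd h.symm (hne _ _)
    · intro h; have := hg _ (by omega) _ (by omega) h; omega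
  · intro i hi
    dsimp only
    split_ifs with h1 h2 h2
    · omega
    · exact hr _ _
    · exact hsym _ _ (hr _ _)
    · omega

end LP

section Hom
variable {V : Type*} [DecidableEq V] {k : ℕ}

def proj (χ : V → Fin k) (E : Finset V) (A : Finset (Fin k)) : Finset V := E.filter (fun x => χ x ∈ A)

def Rainbow (χ : V → Fin k) (F : Finset (Finset V)) : Prop :=
  ∀ E ∈ F, E.card = k ∧ Set.InjOn χ E

def Hom (s : ℕ) (χ : V → Fin k) (F : Finset (Finset V)) (J : Finset (Finset (Fin k))) : Prop :=
  ∀ E ∈ F, ∀ A, Ker s F (proj χ E A) ↔ A ∈ J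

lemma proj_sub (χ : V → Fin k) (E : Finset V) (A : Finset (Fin k)) : proj χ E A ⊆ E :=
  filter_subset _ _

lemma Rainbow.mono {χ : V → Fin k} {F F' : Finset (Finset V)} (h : Rainbow χ F) (hF : F' ⊆ F) :
    Rainbow χ F' := fun E hE => h E (hF hE)

lemma image_full {χ : V → Fin k} {E : Finset V} (h : E.card = k) (h' : Set.InjOn χ E) :
    E.image χ = univ := by
  apply eq_univ_of_card
  rw [card_image_of_injOn h', h, Fintype.card_fin]

lemma exists_color {χ : V → Fin k} {E : Finset V} (h : E.card = k) (h' : Set.InjOn χ E) (a : Fin k) :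
    ∃ x ∈ E, χ x = a := by
  have : a ∈ E.image χ := by rw [image_full h h']; exact mem_univ _
  simpa using this

lemma proj_card {χ : V → Fin k} {E : Finset V} (h : E.card = k) (h' : Set.InjOn χ E)
    (A : Finset (Fin k)) : (proj χ E A).card = A.card := by
  rw [← card_image_of_injOn (f := χ) (h'.mono (by exact_mod_cast proj_sub χ E A))]
  congr 1
  ext a
  simp only [proj, mem_image, mem_filter]
  constructor
  · rintro ⟨x, ⟨_, h2⟩, rfl⟩; exact h2
  · intro ha
    obtain ⟨x, hx, rfl⟩ := exists_color h h' a
    exact ⟨x, ⟨hx, ha⟩, rfl⟩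

lemma proj_univ (χ : V → Fin k) (E : Finset V) : proj χ E univ = E := by simp [proj]

/-- deletion process -/
lemma deletion {s : ℕ} {χ : V → Fin k} (J : Finset (Finset (Fin k))) (N : ℕ) :
    ∀ F : Finset (Finset V), F.card = N → Rainbow χ F →
    (∀ E ∈ F, ∀ A, Ker s F (proj χ E A) → A ∈ J) →
    ∃ (R : Finset (Finset V)) (D : Finset (Fin k) → Finset (Finset V)),
      R ⊆ F ∧ Hom s χ R J ∧ (∀ A, D A ⊆ F) ∧
      (∀ A, ∀ E ∈ D A, ¬ Ker s (D A) (proj χ E A)) ∧ F ⊆ R ∪ J.biUnion D := by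
  induction N with
  | zero =>
    intro F hF _ _
    rw [card_eq_zero] at hF
    subst hF
    exact ⟨∅, fun _ => ∅, by simp, by simp [Hom], by simp, by simp, by simp⟩
  | succ N ih =>
    intro F hF hR hJ
    by_cases hh : Hom s χ F J
    · exact ⟨F, fun _ => ∅, Subset.refl _, hh, by simp, by simp, by simp⟩
    · simp only [Hom] at hh
      push Not at hh
      obtain ⟨E, hE, A, hA⟩ := hh
      have hA2 : ¬ Ker s F (proj χ E A) ∧ A ∈ J := by
        rcases hA with h | h
        · exact absurd (hJ E hE A h.1) h.2
        · exact h
      obtain ⟨hA1, hAJ⟩ := hA2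
      obtain ⟨R, D, h1, h2, h3, h4, h5⟩ := ih (F.erase E) (by rw [card_erase_of_mem hE, hF]; rfl)
        (hR.mono (erase_subset _ _))
        (fun E' hE' A' h => hJ E' (mem_of_mem_erase hE') A' (h.mono (erase_subset _ _)))
      refine ⟨R, Function.update D A (insert E (D A)), h1.trans (erase_subset _ _), h2, ?_, ?_, ?_⟩
      · intro B
        by_cases hB : B = A
        · subst hB; rw [Function.update_self]
          exact insert_subset hE ((h3 B).trans (erase_subset _ _))
        · rw [Function.update_of_ne hB]; exact (h3 B).trans (erase_subset _ _)
      · intro B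
        by_cases hB : B = A
        · subst hB; rw [Function.update_self]
          have hsub : insert E (D B) ⊆ F := insert_subset hE ((h3 B).trans (erase_subset _ _))
          intro E' hE' hK
          by_cases hp : proj χ E' B = proj χ E B
          · rw [hp] at hK; exact hA1 (hK.mono hsub)
          · have hE'D : E' ∈ D B := by
              rcases mem_insert.1 hE' with h | h
              · subst h; exact absurd rfl hp
              · exact h
            apply h4 B E' hE'D
            intro S hS
            obtain ⟨G, hG, hG1, hG2⟩ := hK S hS
            refine ⟨G, ?_, hG1, hG2⟩
            rcases mem_insert.1 hG with h | h
            · exfalso; subst h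
              apply hp
              apply eq_of_subset_of_card_le
              · intro x hx
                simp only [proj, mem_filter] at hx ⊢
                exact ⟨hG1 (by simpa [proj] using hx), hx.2⟩
              · have a := hR _ hE
                have b := hR _ (hsub hE')
                rw [proj_card a.1 a.2, proj_card b.1 b.2]
            · exact h
        · rw [Function.update_of_ne hB]; exact h4 B
      · intro G hG
        by_cases hGE : G = E
        · subst hGE
          apply mem_union_right
          rw [mem_biUnion]
          exact ⟨A, hAJ, by rw [Function.update_self]; exact mem_insert_self _ _⟩
        · have := h5 (mem_erase.2 ⟨hGE, hG⟩)
          rw [mem_union, mem_biUnion] at this ⊢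
          rcases this with h | ⟨B, hB, h⟩
          · exact Or.inl h
          · refine Or.inr ⟨B, hB, ?_⟩
            by_cases hBA : B = A
            · subst hBA; rw [Function.update_self]; exact mem_insert_of_mem h
            · rwa [Function.update_of_ne hBA]

lemma hom_bound {s B : ℕ} {χ : V → Fin k} (N : ℕ) :
    ∀ (J : Finset (Finset (Fin k))), J.card = N → ∀ F : Finset (Finset V), Rainbow χ F →
    (∀ E ∈ F, ∀ A, Ker s F (proj χ E A) → A ∈ J) →
    (∀ F' ⊆ F, ∀ J', Hom s χ F' J' → F'.card ≤ B) →
    F.card ≤ (1 + 2^k)^N * B := by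
  induction N with
  | zero =>
    intro J hJ F hR hF hB
    obtain ⟨R, D, h1, h2, h3, h4, h5⟩ := deletion J _ F rfl hR hF
    rw [card_eq_zero] at hJ
    subst hJ
    simp only [biUnion_empty, union_empty] at h5
    have := hB R h1 _ h2
    simpa using (card_le_card h5).trans this
  | succ N ih =>
    intro J hJ F hR hF hB
    obtain ⟨R, D, h1, h2, h3, h4, h5⟩ := deletion J _ F rfl hR hF
    have hD : ∀ A ∈ J, (D A).card ≤ (1 + 2^k)^N * B := by
      intro A hA
      refine ih (J.erase A) (by rw [card_erase_of_mem hA, hJ]; rfl) (D A) (hR.mono (h3 A)) ?_ ?_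
      · intro E hE A' hK
        refine mem_erase.2 ⟨?_, hF E (h3 A hE) A' (hK.mono (h3 A))⟩
        rintro rfl
        exact h4 _ E hE hK
      · intro F' hF' J' h
        exact hB F' (hF'.trans (h3 A)) J' h
    have hRB := hB R h1 _ h2
    have hJle : J.card ≤ 2^k := by
      have := card_le_univ J
      simpa using this
    calc F.card ≤ (R ∪ J.biUnion D).card := card_le_card h5
      _ ≤ R.card + (J.biUnion D).card := card_union_le _ _
      _ ≤ B + J.card * ((1 + 2^k)^N * B) := add_le_add hRB (card_biUnion_le_card_mul _ _ _ hD)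
      _ ≤ (1 + 2^k)^N * B + 2^k * ((1 + 2^k)^N * B) := by
          apply add_le_add
          · exact Nat.le_mul_of_pos_left _ (by positivity)
          · exact Nat.mul_le_mul_right _ hJle
      _ = (1 + 2^k)^(N+1) * B := by ring

lemma rainbow_bound [Fintype V] (hk : 0 < k) {B : ℕ} (F : Finset (Finset V)) (hF : ∀ E ∈ F, E.card = k)
    (hB : ∀ χ : V → Fin k, ∀ F' ⊆ F, Rainbow χ F' → F'.card ≤ B) : F.card ≤ k^k * B := by
  classical
  let T : (V → Fin k) → Finset (Finset V) := fun χ => F.filter (fun E => Set.InjOn χ E)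
  have h1 : ∑ χ : V → Fin k, (T χ).card ≤ k ^ (Fintype.card V) * B := by
    calc _ ≤ ∑ χ : V → Fin k, B := sum_le_sum (fun χ _ => hB χ _ (filter_subset _ _) (by
            intro E hE
            rw [mem_filter] at hE
            exact ⟨hF E hE.1, hE.2⟩))
      _ = _ := by simp
  have h2 : ∑ χ : V → Fin k, (T χ).card
      = ∑ E ∈ F, (univ.filter (fun χ : V → Fin k => Set.InjOn χ E)).card := by
    simp only [T, card_filter]
    exact sum_comm
  have h3 : ∀ E ∈ F, k ^ (Fintype.card V - k) ≤
      (univ.filter (fun χ : V → Fin k => Set.InjOn χ E)).card := by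
    intro E hE
    let e : E ≃ Fin k := E.equivFinOfCardEq (hF E hE)
    have hc : Fintype.card ({v : V // v ∉ E} → Fin k) = k ^ (Fintype.card V - k) := by
      rw [Fintype.card_fun, Fintype.card_fin, Fintype.card_subtype_compl, Fintype.card_coe, hF E hE]
    rw [← hc, ← Finset.card_univ]
    apply card_le_card_of_injOn
      (fun g => fun v => if h : v ∈ E then e ⟨v, h⟩ else g ⟨v, h⟩)
    · intro g _
      simp only [coe_filter, mem_univ, true_and, Set.mem_ofPred_eq]
      intro x hx y hy hxy
      have hx' : x ∈ E := hx
      have hy' : y ∈ E := hy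
      simp only [hx', hy', dif_pos] at hxy
      have := e.injective hxy
      simpa using this
    · intro g _ g' _ hgg
      funext ⟨v, hv⟩
      have := congrFun hgg v
      simpa [hv] using this
  have h4 : F.card * k ^ (Fintype.card V - k) ≤ k ^ (Fintype.card V) * B := by
    calc _ = ∑ E ∈ F, k ^ (Fintype.card V - k) := by simp
      _ ≤ _ := sum_le_sum h3
      _ = _ := h2.symm
      _ ≤ _ := h1
  by_cases hF0 : F = ∅
  · simp [hF0]
  obtain ⟨E, hE⟩ := nonempty_iff_ne_empty.2 hF0
  have hkn : k ≤ Fintype.card V := by rw [← hF E hE]; exact card_le_univ E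
  have h5 : k ^ (Fintype.card V) = k ^ (Fintype.card V - k) * k ^ k := by
    rw [← pow_add, Nat.sub_add_cancel hkn]
  rw [h5, mul_assoc, mul_comm F.card] at h4
  exact Nat.le_of_mul_le_mul_left h4 (by positivity)

theorem furedi [Fintype V] (hk : 0 < k) {s B : ℕ} (F : Finset (Finset V)) (hF : ∀ E ∈ F, E.card = k)
    (hB : ∀ χ : V → Fin k, ∀ F' ⊆ F, Rainbow χ F' → ∀ J, Hom s χ F' J → F'.card ≤ B) :
    F.card ≤ k^k * ((1 + 2^k)^(2^k) * B) := by
  apply rainbow_bound hk F hF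
  intro χ F' hF' hR
  refine hom_bound (s := s) (χ := χ) (2^k) univ (by simp) F' hR (by simp) ?_
  intro F'' hF'' J' h
  exact hB χ F'' (hF''.trans hF') (hR.mono hF'') J' h

lemma Hom.univ_mem {s : ℕ} {χ : V → Fin k} {F : Finset (Finset V)} {J : Finset (Finset (Fin k))}
    (h : Hom s χ F J) (hne : F.Nonempty) : univ ∈ J := by
  obtain ⟨E, hE⟩ := hne
  rw [← h E hE, proj_univ]
  exact Ker.of_mem hE

lemma Hom.inter_mem {s : ℕ} {χ : V → Fin k} {F : Finset (Finset V)} {J : Finset (Finset (Fin k))}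
    (h : Hom s χ F J) (hR : Rainbow χ F) (hne : F.Nonempty) {A B : Finset (Fin k)} (hA : A ∈ J)
    (hB : B ∈ J) : A ∩ B ∈ J := by
  obtain ⟨E, hE⟩ := hne
  rw [← h E hE]
  intro S hS
  obtain ⟨E1, hE1, h1, h2⟩ := (h E hE A).2 hA S hS
  obtain ⟨E2, hE2, h3, h4⟩ := (h E1 hE1 B).2 hB S hS
  refine ⟨E2, hE2, ?_, ?_⟩
  · intro x hx
    simp only [proj, mem_filter, mem_inter] at hx
    apply h3
    simp only [proj, mem_filter]
    exact ⟨h1 (by simp [proj, hx]), hx.2.2⟩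
  · intro x hx hxS
    have a := h4 x hx hxS
    simp only [proj, mem_filter] at a
    have b := h2 x a.1 hxS
    simp only [proj, mem_filter, mem_inter] at b ⊢
    exact ⟨b.1, b.2, a.2⟩

lemma proj_insert {χ : V → Fin k} {E : Finset V} (h' : Set.InjOn χ E) {x : V} (hx : x ∈ E)
    (A : Finset (Fin k)) : proj χ E (insert (χ x) A) = insert x (proj χ E A) := by
  ext y
  simp only [proj, mem_filter, mem_insert]
  constructor
  · rintro ⟨h1, h2 | h2⟩
    · exact Or.inl (h' h1 hx h2)
    · exact Or.inr ⟨h1, h2⟩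
  · rintro (rfl | h)
    · exact ⟨hx, Or.inl rfl⟩
    · exact ⟨h.1, Or.inr h.2⟩

lemma fiber_bound {s : ℕ} {χ : V → Fin k} {F : Finset (Finset V)} {J : Finset (Finset (Fin k))}
    (h : Hom s χ F J) (hR : Rainbow χ F) {B : Finset (Fin k)}
    (hB : ∀ A ∈ J, B ⊆ A → A = univ) (d : ℕ) : ∀ A : Finset (Fin k), B ⊆ A → A.card + d = k →
    ∀ T : Finset V, (F.filter (fun E => proj χ E A = T)).card ≤ s ^ d := by
  induction d with
  | zero =>
    intro A hBA hA T
    have : A = univ := eq_univ_of_card _ (by simpa using hA)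
    subst this
    rw [pow_zero, card_le_one]
    intro E hE E' hE'
    simp only [mem_filter, proj_univ] at hE hE'
    rw [hE.2, hE'.2]
  | succ d ih =>
    intro A hBA hA T
    by_cases hne : (F.filter (fun E => proj χ E A = T)) = ∅
    · rw [hne]; simp
    obtain ⟨E0, hE0⟩ := nonempty_iff_ne_empty.2 hne
    rw [mem_filter] at hE0
    have hAu : A ≠ univ := by
      rintro rfl
      simp at hA
    have hnK : ¬ Ker s F T := by
      rw [← hE0.2, h E0 hE0.1]
      intro hAJ; exact hAu (hB A hAJ hBA)
    simp only [Ker] at hnK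
    push Not at hnK
    obtain ⟨S, hS, hS2⟩ := hnK
    have hsub : (F.filter (fun E => proj χ E A = T)) ⊆
        (S.filter (fun x => χ x ∉ A)).biUnion (fun x => F.filter (fun E => proj χ E (insert (χ x) A) = insert x T)) := by
      intro E hE
      rw [mem_filter] at hE
      obtain ⟨x, hx, hxS, hxT⟩ := hS2 E hE.1 (by rw [← hE.2]; exact proj_sub _ _ _)
      rw [mem_biUnion]
      refine ⟨x, mem_filter.2 ⟨hxS, ?_⟩, mem_filter.2 ⟨hE.1, ?_⟩⟩
      · intro hxA; apply hxT; rw [← hE.2]; simp [proj, hx, hxA]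
      · rw [proj_insert (hR E hE.1).2 hx, hE.2]
    calc _ ≤ _ := card_le_card hsub
      _ ≤ (S.filter (fun x => χ x ∉ A)).card * s^d := by
          apply card_biUnion_le_card_mul
          intro x hx
          rw [mem_filter] at hx
          apply ih _ (hBA.trans (subset_insert _ _))
          rw [card_insert_of_notMem hx.2]; omega
      _ ≤ s * s^d := Nat.mul_le_mul_right _ ((card_filter_le _ _).trans hS)
      _ = s^(d+1) := by ring

lemma rank_bound {s : ℕ} {χ : V → Fin k} {F : Finset (Finset V)} {J : Finset (Finset (Fin k))}
    (h : Hom s χ F J) (hR : Rainbow χ F) (W : Finset V) (hW : ∀ E ∈ F, E ⊆ W) (hs : 1 ≤ s)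
    {B : Finset (Fin k)} (hB : ∀ A ∈ J, B ⊆ A → A = univ) : F.card ≤ s^k * W.card ^ B.card := by
  have hBk : B.card ≤ k := by simpa using card_le_univ B
  have hsub : ∀ E ∈ F, proj χ E B ∈ W.powersetCard B.card := by
    intro E hE
    rw [mem_powersetCard]
    exact ⟨(proj_sub _ _ _).trans (hW E hE), proj_card (hR E hE).1 (hR E hE).2 B⟩
  calc F.card ≤ s^(k - B.card) * (W.powersetCard B.card).card :=
        card_le_mul_card_image_of_maps_to hsub _ (fun T _ =>
          fiber_bound h hR hB (k - B.card) B (Subset.refl _) (by omega) T)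
    _ ≤ s^k * W.card ^ B.card := by
        rw [card_powersetCard]
        exact Nat.mul_le_mul (Nat.pow_le_pow_right hs (by omega)) (Nat.choose_le_pow _ _)

lemma two_singletons {s m : ℕ} {χ : V → Fin k} {F : Finset (Finset V)} {J : Finset (Finset (Fin k))}
    (h : Hom s χ F J) (hR : Rainbow χ F) (hne : F.Nonempty) {a b : Fin k} (hab : a ≠ b)
    (ha : {a} ∈ J) (hb : {b} ∈ J) (hs : 2 * m * k ≤ s) : HasPath m F := by
  have key : ∀ r ≤ m, ∃ P : ℕ → Finset V, ∃ c c' : Fin k, c ≠ c' ∧ {c} ∈ J ∧ {c'} ∈ J ∧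
      (∀ i ≤ r, P i ∈ F) ∧
      (∀ i, i + 1 ≤ r → (P i ∩ P (i+1)).card = 1) ∧ (∀ i j, i + 1 < j → j ≤ r → P i ∩ P j = ∅) ∧
      ∀ x ∈ P r, χ x = c → ∀ i < r, x ∉ P i := by
    intro r
    induction r with
    | zero =>
      intro _
      obtain ⟨E, hE⟩ := hne
      exact ⟨fun _ => E, a, b, hab, ha, hb, fun _ _ => hE, by simp, by omega, by simp⟩
    | succ r ih =>
      intro hr
      obtain ⟨P, c, c', hcc, hc, hc', h1, h2, h3, h4⟩ := ih (by omega)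
      have hPr := hR _ (h1 r le_rfl)
      obtain ⟨x, hx, hxc⟩ := exists_color hPr.1 hPr.2 c
      have hproj : proj χ (P r) {c} = {x} := by
        ext y
        simp only [proj, mem_filter, mem_singleton]
        constructor
        · rintro ⟨hy, hyc⟩; exact hPr.2 hy hx (hyc.trans hxc.symm)
        · rintro rfl; exact ⟨hx, hxc⟩
      obtain ⟨E, hE, hE1, hE2⟩ := (h _ (h1 r le_rfl) {c}).2 hc ((range (r+1)).biUnion P) (by
        have : ((range (r+1)).biUnion P).card ≤ (r+1) * k := by
          simpa using card_biUnion_le_card_mul (range (r+1)) P k (by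
            intro i hi; exact (hR _ (h1 i (by simp at hi; omega))).1.le)
        have e : (r+1) * k ≤ m * k := Nat.mul_le_mul_right _ hr
        have e : 2 * m * k = m * k + m * k := by ring
        omega)
      rw [hproj] at hE1 hE2
      rw [singleton_subset_iff] at hE1
      have hE3 : ∀ y ∈ E, ∀ i ≤ r, y ∈ P i → y = x := by
        intro y hy i hi hyi
        simpa using hE2 y hy (mem_biUnion.2 ⟨i, by simp; omega, hyi⟩)
      refine ⟨Function.update P (r+1) E, c', c, hcc.symm, hc', hc, ?_, ?_, ?_, ?_⟩
      · intro i hi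
        by_cases hir : i = r + 1
        · subst hir; rw [Function.update_self]; exact hE
        · rw [Function.update_of_ne hir]; exact h1 i (by omega)
      · intro i hi
        rw [Function.update_of_ne (by omega)]
        by_cases hir : i = r
        · subst hir; rw [Function.update_self, card_eq_one]
          refine ⟨x, ?_⟩
          ext y
          simp only [mem_inter, mem_singleton]
          constructor
          · rintro ⟨hy1, hy2⟩; exact hE3 y hy2 i le_rfl hy1
          · rintro rfl; exact ⟨hx, hE1⟩
        · rw [Function.update_of_ne (by omega)]; exact h2 i (by omega)
      · intro i j hij hj
        rw [Function.update_of_ne (by omega)]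
        by_cases hjr : j = r + 1
        · subst hjr; rw [Function.update_self]
          ext y
          simp only [mem_inter, notMem_empty, iff_false]
          rintro ⟨hy1, hy2⟩
          have := hE3 y hy2 i (by omega) hy1
          subst this
          exact h4 y hx hxc i (by omega) hy1
        · rw [Function.update_of_ne (by omega)]; exact h3 i j hij (by omega)
      · rw [Function.update_self]
        intro y hy hyc i hi
        rw [Function.update_of_ne (by omega)]
        intro hyi
        have := hE3 y hy i (by omega) hyi
        subst this
        exact hcc (hxc.symm.trans hyc)
  obtain ⟨P, c, c', _, _, _, h1, h2, h3, _⟩ := key m le_rfl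
  exact ⟨P, fun i hi => h1 i (by omega), fun i hi => h2 i (by omega), fun i j hij hj => h3 i j hij (by omega)⟩

end Hom

lemma pattern {k : ℕ} (hk : 4 ≤ k) (J : Finset (Finset (Fin k))) (hu : univ ∈ J)
    (hi : ∀ A ∈ J, ∀ B ∈ J, A ∩ B ∈ J)
    (hc : ∀ B : Finset (Fin k), B.card = k - 2 → ∃ A ∈ J, B ⊆ A ∧ A ≠ univ)
    (hs : ∀ a b : Fin k, a ≠ b → {a} ∈ J → {b} ∈ J → False) :
    ∃ u, ∀ v, v ≠ u → {u, v} ∈ J := by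
  -- unions of complements
  have hun : ∀ X : Finset (Fin k), (∀ i ∈ X, ∃ Y ⊆ X, i ∈ Y ∧ Yᶜ ∈ J) → Xᶜ ∈ J := by
    intro X hX
    choose! Y hY using hX
    have h1 : ∀ Z : Finset (Fin k), Z ⊆ X → (Z.biUnion Y)ᶜ ∈ J := by
      intro Z
      induction Z using Finset.induction_on with
      | empty => intro _; simpa using hu
      | insert a Z _ ih =>
        intro hZ
        rw [biUnion_insert, compl_union]
        exact hi _ (hY a (hZ (mem_insert_self _ _))).2.2 _ (ih ((subset_insert _ _).trans hZ))
    have h2 : X.biUnion Y = X := by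
      ext i
      rw [mem_biUnion]
      constructor
      · rintro ⟨j, hj, h⟩; exact (hY j hj).1 h
      · intro h; exact ⟨i, h, (hY i h).2.1⟩
    rw [← h2]; exact h1 X (Subset.refl _)
  have hpair : ∀ i j : Fin k, i ≠ j → {i}ᶜ ∈ J ∨ {j}ᶜ ∈ J ∨ ({i, j} : Finset (Fin k))ᶜ ∈ J := by
    intro i j hij
    obtain ⟨A, hA, h1, h2⟩ := hc ({i,j}ᶜ) (by rw [card_compl, card_pair hij, Fintype.card_fin])
    have hAs : Aᶜ ⊆ {i, j} := by
      rw [← compl_compl ({i, j} : Finset (Fin k))]; exact compl_subset_compl.2 h1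
    have : A = Aᶜᶜ := (compl_compl A).symm
    rw [this] at hA h2
    generalize Aᶜ = C at *
    by_cases hiC : i ∈ C <;> by_cases hjC : j ∈ C
    · right; right
      have : C = {i, j} := Subset.antisymm hAs (by simp [insert_subset_iff, hiC, hjC])
      rwa [← this]
    · left
      have : C = {i} := by
        ext x; rw [mem_singleton]
        constructor
        · intro hx
          rcases mem_insert.1 (hAs hx) with h | h
          · exact h
          · rw [mem_singleton] at h; subst h; exact absurd hx hjC
        · rintro rfl; exact hiC
      rwa [← this]
    · right; left
      have : C = {j} := by
        ext x; rw [mem_singleton]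
        constructor
        · intro hx
          rcases mem_insert.1 (hAs hx) with h | h
          · subst h; exact absurd hx hiC
          · rwa [mem_singleton] at h
        · rintro rfl; exact hjC
      rwa [← this]
    · exfalso
      apply h2
      have : C = ∅ := by
        apply eq_empty_of_forall_notMem
        intro x hx
        have := hAs hx
        simp only [mem_insert, mem_singleton] at this
        rcases this with rfl | rfl <;> contradiction
      rw [this, compl_empty]
  have hm : ∀ m : Fin k, {m} ∉ J → ∃ i, i ≠ m ∧ {i}ᶜ ∉ J ∧ ∀ j, j ≠ i → j ≠ m → {j}ᶜ ∈ J := by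
    intro m hmJ
    by_contra hcon
    push Not at hcon
    apply hmJ
    rw [← compl_compl ({m} : Finset (Fin k))]
    apply hun
    intro i him
    simp only [mem_compl, mem_singleton] at him
    by_cases hiU : {i}ᶜ ∈ J
    · exact ⟨{i}, by simpa using fun h => him h.symm, by simp, hiU⟩
    · obtain ⟨j, hj1, hj2, hj3⟩ := hcon i him hiU
      refine ⟨{i, j}, ?_, by simp, ?_⟩
      · intro x hx; simp only [mem_insert, mem_singleton] at hx
        simp only [mem_compl, mem_singleton]
        rcases hx with rfl | rfl <;> assumption
      · rcases hpair i j hj1.symm with h | h | h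
        · exact absurd h hiU
        · exact absurd h hj3
        · exact h
  -- three nonsingletons
  have h3 : ∃ m1 m2 m3 : Fin k, m1 ≠ m2 ∧ m1 ≠ m3 ∧ m2 ≠ m3 ∧ {m1} ∉ J ∧ {m2} ∉ J ∧ {m3} ∉ J := by
    have hcard : ((univ : Finset (Fin k)).filter (fun a => {a} ∈ J)).card ≤ 1 := by
      rw [card_le_one]
      intro a ha b hb
      by_contra hab
      exact hs a b hab (mem_filter.1 ha).2 (mem_filter.1 hb).2
    have := card_filter_add_card_filter_not (s := (univ : Finset (Fin k))) (fun a => {a} ∈ J)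
    rw [card_univ, Fintype.card_fin] at this
    obtain ⟨a, b, c, ha, hb, hc, h1, h2, h3⟩ := two_lt_card_iff.1 (by omega : 2 < ((univ : Finset (Fin k)).filter (fun a => ¬ {a} ∈ J)).card)
    simp only [mem_filter, mem_univ, true_and] at ha hb hc
    exact ⟨a, b, c, h1, h2, h3, ha, hb, hc⟩
  obtain ⟨m1, m2, m3, h12, h13, h23, hm1, hm2, hm3⟩ := h3
  obtain ⟨i1, a1, b1, c1⟩ := hm m1 hm1
  obtain ⟨i2, a2, b2, c2⟩ := hm m2 hm2
  obtain ⟨i3, a3, b3, c3⟩ := hm m3 hm3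
  have hU : ∃ u, ∀ j, j ≠ u → {j}ᶜ ∈ J := by
    refine ⟨i1, ?_⟩
    intro j hj
    by_contra hjJ
    have e1 : j = m1 := by by_contra h; exact hjJ (c1 j hj h)
    subst e1
    -- U = {i1, j}
    have d2 : j = i2 := by by_contra h; exact hjJ (c2 j h h12)
    have d3 : j = i3 := by by_contra h; exact hjJ (c3 j h h13)
    subst d2
    have f2 : i1 = m2 := by by_contra h; exact b1 (c2 i1 hj.symm h)
    have f3 : i1 = m3 := by by_contra h; exact b1 (c3 i1 (by rw [← d3]; exact hj.symm) h)
    exact h23 (f2.symm.trans f3)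
  obtain ⟨u, hu⟩ := hU
  refine ⟨u, fun v hv => ?_⟩
  rw [← compl_compl ({u, v} : Finset (Fin k))]
  apply hun
  intro i hi'
  simp only [mem_compl, mem_insert, mem_singleton, not_or] at hi'
  exact ⟨{i}, by simp [hi'.1, hi'.2], by simp, hu i hi'.1⟩

section HC
variable {V : Type*} [DecidableEq V] {k : ℕ}

def CC (k s : ℕ) : ℕ := k^k * ((1 + 2^k)^(2^k) * s^k)

lemma generic_bound [Fintype V] (hk : 4 ≤ k) {s m : ℕ} (hs1 : 1 ≤ s) (hs : 2 * m * k ≤ s)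
    (H : Finset (Finset V)) (hH : ∀ E ∈ H, E.card = k) (hP : ¬ HasPath m H) (W : Finset V)
    (hW : ∀ E ∈ H, E ⊆ W) : H.card ≤ CC k s * W.card ^ (k-1) := by
  have := furedi (s := s) (B := s^k * W.card^(k-1)) (by omega : 0 < k) H hH (by
    intro χ F' hF' hR J hJ
    rcases F'.eq_empty_or_nonempty with rfl | hne
    · simp
    by_cases hall : ∀ i : Fin k, {i}ᶜ ∈ J
    · exfalso
      have hX : ∀ X : Finset (Fin k), Xᶜ ∈ J := by
        intro X
        induction X using Finset.induction_on with
        | empty => simpa using hJ.univ_mem hne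
        | insert a X _ ih =>
          rw [insert_eq, compl_union]
          exact hJ.inter_mem hR hne (hall a) ih
      have hX' : ∀ X : Finset (Fin k), X ∈ J := by
        intro X; have := hX Xᶜ; rwa [compl_compl] at this
      exact hP ((two_singletons hJ hR hne (a := ⟨0, by omega⟩) (b := ⟨1, by omega⟩) (by simp)
        (hX' _) (hX' _) hs).mono hF')
    · push Not at hall
      obtain ⟨i, hi⟩ := hall
      have := rank_bound hJ hR W (fun E hE => hW E (hF' hE)) hs1 (B := {i}ᶜ) (by
        intro A hA hiA
        by_contra hne
        have hiA' : i ∉ A := by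
          intro h
          apply hne
          rw [eq_univ_iff_forall]
          intro x
          by_cases hx : x = i
          · subst hx; exact h
          · exact hiA (by simpa using hx)
        apply hi
        have : A = {i}ᶜ := by
          apply Subset.antisymm _ hiA
          intro x hx
          simp only [mem_compl, mem_singleton]
          rintro rfl; exact hiA' hx
        rwa [← this])
      rwa [card_compl, card_singleton, Fintype.card_fin] at this)
  refine this.trans (le_of_eq ?_)
  simp only [CC]; ring

lemma bad_bound [Fintype V] (hk : 4 ≤ k) {s m : ℕ} (hs1 : 1 ≤ s) (hs : 2 * m * k ≤ s)
    (H R : Finset (Finset V)) (hH : ∀ E ∈ H, E.card = k) (hP : ¬ HasPath m H) (hRH : R ⊆ H)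
    (hbad : ∀ E ∈ R, ¬ ∃ x ∈ E, ∀ y ∈ E, y ≠ x → KAdj s H x y) :
    R.card ≤ CC k s * (Fintype.card V) ^ (k-2) := by
  have := furedi (s := s) (B := s^k * (Fintype.card V)^(k-2)) (by omega : 0 < k) R
    (fun E hE => hH E (hRH hE)) (by
    intro χ F' hF' hR J hJ
    rcases F'.eq_empty_or_nonempty with rfl | hne
    · simp
    by_cases hcov : ∀ B : Finset (Fin k), B.card = k - 2 → ∃ A ∈ J, B ⊆ A ∧ A ≠ univ
    · exfalso
      obtain ⟨u, hu⟩ := pattern hk J (hJ.univ_mem hne) (fun A hA B hB => hJ.inter_mem hR hne hA hB)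
        hcov (by
          intro a b hab ha hb
          exact hP ((two_singletons hJ hR hne hab ha hb hs).mono (hF'.trans hRH)))
      obtain ⟨E, hE⟩ := hne
      obtain ⟨hEk, hEi⟩ := hR E hE
      apply hbad E (hF' hE)
      obtain ⟨x, hx, hxu⟩ := exists_color hEk hEi u
      refine ⟨x, hx, fun y hy hyx => ⟨hyx.symm, ?_⟩⟩
      have hyu : χ y ≠ u := fun h => hyx (hEi hy hx (h.trans hxu.symm))
      have h1 := (hJ E hE _).2 (hu _ hyu)
      have h2 : proj χ E {u, χ y} = {x, y} := by
        ext z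
        simp only [proj, mem_filter, mem_insert, mem_singleton]
        constructor
        · rintro ⟨hz, h | h⟩
          · exact Or.inl (hEi hz hx (h.trans hxu.symm))
          · exact Or.inr (hEi hz hy h)
        · rintro (rfl | rfl)
          · exact ⟨hx, Or.inl hxu⟩
          · exact ⟨hy, Or.inr rfl⟩
      rw [h2] at h1
      exact h1.mono (hF'.trans hRH)
    · push Not at hcov
      obtain ⟨B, hB, hB2⟩ := hcov
      have := rank_bound hJ hR univ (fun E _ => subset_univ E) hs1 (B := B) hB2
      rwa [hB] at this)
  refine this.trans (le_of_eq ?_)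
  simp only [CC]; ring

open Classical in
noncomputable def dg [Fintype V] (r : V → V → Prop) (x : V) : ℕ := (univ.filter (fun y => r x y)).card

lemma count_bound [Fintype V] (hk : 4 ≤ k) {s m : ℕ} (hs1 : 1 ≤ s) (hs : 2 * m * k ≤ s)
    (H : Finset (Finset V)) (hH : ∀ E ∈ H, E.card = k) (hP : ¬ HasPath m H) :
    H.card ≤ CC k s * (Fintype.card V) ^ (k-2) + ∑ x, (dg (KAdj s H) x).choose (k-1) := by
  classical
  set R := H.filter (fun E => ¬ ∃ x ∈ E, ∀ y ∈ E, y ≠ x → KAdj s H x y) with hRdef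
  have hR := bad_bound hk hs1 hs H R hH hP (filter_subset _ _) (fun E hE => (mem_filter.1 hE).2)
  let G : V → Finset (Finset V) := fun x =>
    ((univ.filter (fun y => KAdj s H x y)).powersetCard (k-1)).image (fun S => insert x S)
  have hsub : H ⊆ R ∪ univ.biUnion G := by
    intro E hE
    by_cases hb : ∃ x ∈ E, ∀ y ∈ E, y ≠ x → KAdj s H x y
    · apply mem_union_right
      obtain ⟨x, hx, hxy⟩ := hb
      rw [mem_biUnion]
      refine ⟨x, mem_univ _, ?_⟩
      simp only [G, mem_image]
      refine ⟨E.erase x, ?_, insert_erase hx⟩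
      rw [mem_powersetCard, card_erase_of_mem hx, hH E hE]
      refine ⟨?_, rfl⟩
      intro y hy
      rw [mem_erase] at hy
      simp only [mem_filter, mem_univ, true_and]
      exact hxy y hy.2 hy.1
    · exact mem_union_left _ (mem_filter.2 ⟨hE, hb⟩)
  calc H.card ≤ _ := card_le_card hsub
    _ ≤ R.card + (univ.biUnion G).card := card_union_le _ _
    _ ≤ _ := by
      apply add_le_add hR
      refine card_biUnion_le.trans (sum_le_sum fun x _ => ?_)
      refine card_image_le.trans ?_
      rw [card_powersetCard, dg]

/-- greedy path in a graph of large minimum degree -/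
lemma greedy_path {r : V → V → Prop} [DecidableRel r] (hirr : ∀ x, ¬ r x x) (W : Finset V)
    (hne : W.Nonempty) (m : ℕ)
    (hd : ∀ x ∈ W, m ≤ (W.filter (fun y => r x y)).card) :
    ∃ v : ℕ → V, (∀ i ≤ m, ∀ j ≤ m, v i = v j → i = j) ∧ ∀ i < m, r (v i) (v (i+1)) := by
  have key : ∀ l ≤ m, ∃ v : ℕ → V, (∀ i ≤ l, v i ∈ W) ∧ (∀ i ≤ l, ∀ j ≤ l, v i = v j → i = j) ∧
      ∀ i < l, r (v i) (v (i+1)) := by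
    intro l
    induction l with
    | zero =>
      intro _
      obtain ⟨x, hx⟩ := hne
      exact ⟨fun _ => x, fun _ _ => hx, by omega, by omega⟩
    | succ l ih =>
      intro hl
      obtain ⟨v, h1, h2, h3⟩ := ih (by omega)
      have : ∃ y ∈ W.filter (fun y => r (v l) y), y ∉ (range l).image v := by
        apply exists_mem_notMem_of_card_lt_card
        have a := hd _ (h1 l le_rfl)
        have b : ((range l).image v).card ≤ l := by simpa using card_image_le (s := range l) (f := v)
        omega
      obtain ⟨y, hy, hyn⟩ := this
      rw [mem_filter] at hy
      have hyv : ∀ i ≤ l, y ≠ v i := by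
        intro i hi h
        rcases Nat.lt_or_ge i l with hh | hh
        · exact hyn (mem_image.2 ⟨i, by simpa using hh, h.symm⟩)
        · have : i = l := by omega
          subst this
          rw [h] at hy; exact hirr _ hy.2
      refine ⟨Function.update v (l+1) y, ?_, ?_, ?_⟩
      · intro i hi
        by_cases h : i = l + 1
        · subst h; rw [Function.update_self]; exact hy.1
        · rw [Function.update_of_ne h]; exact h1 i (by omega)
      · intro i hi j hj
        by_cases h : i = l + 1 <;> by_cases h' : j = l + 1
        · omega
        · subst h; rw [Function.update_self, Function.update_of_ne h']
          intro e; exact absurd e (hyv j (by omega))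
        · subst h'; rw [Function.update_self, Function.update_of_ne h]
          intro e; exact absurd e.symm (hyv i (by omega))
        · rw [Function.update_of_ne h', Function.update_of_ne h]
          exact h2 i (by omega) j (by omega)
      · intro i hi
        rw [Function.update_of_ne (by omega)]
        by_cases h : i = l
        · subst h; rw [Function.update_self]; exact hy.2
        · rw [Function.update_of_ne (by omega)]; exact h3 i (by omega)
  obtain ⟨v, _, h⟩ := key m le_rfl
  exact ⟨v, h⟩

lemma erdos_gallai {r : V → V → Prop} [DecidableRel r] (hirr : ∀ x, ¬ r x x)
    (hsym : ∀ x y, r x y → r y x) (m : ℕ)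
    (hno : ¬ ∃ v : ℕ → V, (∀ i ≤ m, ∀ j ≤ m, v i = v j → i = j) ∧ ∀ i < m, r (v i) (v (i+1)))
    (N : ℕ) : ∀ W : Finset V, W.card = N → ∑ x ∈ W, (W.filter (fun y => r x y)).card ≤ 2 * m * N := by
  induction N with
  | zero => intro W hW; rw [card_eq_zero] at hW; simp [hW]
  | succ N ih =>
    intro W hW
    have hne : W.Nonempty := by rw [← card_pos]; omega
    have : ∃ x ∈ W, (W.filter (fun y => r x y)).card < m := by
      by_contra hcon
      push Not at hcon
      exact hno (greedy_path hirr W hne m hcon)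
    obtain ⟨x, hx, hxm⟩ := this
    have ih' := ih (W.erase x) (by rw [card_erase_of_mem hx, hW]; rfl)
    rw [← insert_erase hx, sum_insert (notMem_erase _ _), insert_erase hx]
    have h1 : ∑ z ∈ W.erase x, (W.filter (fun y => r z y)).card
        = ∑ z ∈ W.erase x, ((W.erase x).filter (fun y => r z y)).card
          + ∑ z ∈ W.erase x, (if r z x then 1 else 0) := by
      rw [← sum_add_distrib]
      apply sum_congr rfl
      intro z _
      conv_lhs => rw [← insert_erase hx, filter_insert]
      split_ifs with h
      · rw [card_insert_of_notMem (by simp)]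
      · simp
    have h2 : ∑ z ∈ W.erase x, (if r z x then 1 else 0) ≤ (W.filter (fun y => r x y)).card := by
      rw [← card_filter]
      apply card_le_card
      intro z hz
      rw [mem_filter, mem_erase] at hz
      rw [mem_filter]
      exact ⟨hz.1.2, hsym _ _ hz.2⟩
    have e : 2 * m * (N+1) = 2 * m * N + 2 * m := by ring
    omega

end HC

section G

lemma Y_bound {V : Type*} [Fintype V] [DecidableEq V] {r : V → V → Prop} [DecidableRel r]
    (hsym : ∀ x y, r x y → r y x) (t : ℕ) (L : Finset V)
    (hK : ∀ X Y : Finset V, X.card = t+1 → Y.card = t+1 → ¬ ∀ x ∈ X, ∀ y ∈ Y, r x y) :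
    (univ.filter (fun y => t + 1 ≤ (L.filter (fun x => r y x)).card)).card ≤ t * 2^L.card := by
  have := card_le_mul_card_image_of_maps_to (s := univ.filter (fun y => t + 1 ≤ (L.filter (fun x => r y x)).card))
    (t := L.powerset) (f := fun y => L.filter (fun x => r y x)) (by
      intro y _; rw [mem_powerset]; exact filter_subset _ _) t (by
      intro S hS
      by_contra hcon
      push Not at hcon
      obtain ⟨Y, hY, hYc⟩ := exists_subset_card_eq (Nat.succ_le_of_lt hcon)
      have hmem : ∀ y ∈ Y, t + 1 ≤ S.card ∧ L.filter (fun x => r y x) = S := by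
        intro y hy
        have := hY hy
        simp only [mem_filter, mem_univ, true_and] at this
        exact ⟨by rw [← this.2]; exact this.1, this.2⟩
      have hYne : Y.Nonempty := by rw [← card_pos]; omega
      obtain ⟨y0, hy0⟩ := hYne
      obtain ⟨X, hX, hXc⟩ := exists_subset_card_eq (hmem y0 hy0).1
      refine hK X Y hXc hYc (fun x hx y hy => ?_)
      have h1 := hX hx
      rw [← (hmem y hy).2, mem_filter] at h1
      exact hsym _ _ h1.2)
  rwa [card_powerset] at this

set_option maxHeartbeats 1000000 in
lemma graph_lemma (t q C C' Q : ℕ) (ht : 1 ≤ t) (hq : 3 ≤ q) : ∃ n0 : ℕ,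
    ∀ (V : Type) [Fintype V] [DecidableEq V] (r : V → V → Prop) (n : ℕ), Fintype.card V = n → n0 ≤ n →
    (∀ x y, r x y → r y x) →
    (∀ X Y : Finset V, X.card = t+1 → Y.card = t+1 → ¬ ∀ x ∈ X, ∀ y ∈ Y, r x y) →
    ∑ x, dg r x ≤ C * n → t * n^q ≤ ∑ x, (dg r x)^q + C' * n^(q-1) →
    ∃ T : Finset V, T.card = t ∧ ∃ N : Finset V, (∀ v, v ∈ N ↔ ∀ x ∈ T, r x v) ∧ Q * Nᶜ.card ≤ n := by
  classical
  obtain ⟨p, rfl⟩ : ∃ p, q = p + 3 := ⟨q - 3, by omega⟩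
  set Q' := 2 * (t+1) * (Q+1) with hQ'
  set Z := 2 * Q' * C + 1 with hZ
  set M := Z * C with hM
  set K := M * (t * 2^M) with hKdef
  refine ⟨2 * Q' * Z * (K + C') + 2 * K + 2 * C' + 1, ?_⟩
  intro V _ _ r n hn hn0 hsym hK hsum hpow
  have hnpos : 0 < n := by omega
  have hn1 : 2 * Q' * Z * (K + C') ≤ n := by omega
  have hn2 : 2 * K < n := by omega
  have hn3 : 2 * C' < n := by omega
  set a : V → ℕ := dg r with ha
  have han : ∀ x, a x ≤ n := by
    intro x; rw [← hn]; exact card_le_univ _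
  set L := univ.filter (fun x => n ≤ Z * a x) with hL
  have hLM : L.card ≤ M := by
    have h1 : L.card * n ≤ ∑ x ∈ L, Z * a x := by
      rw [← smul_eq_mul]
      exact card_nsmul_le_sum _ _ _ (fun x hx => (mem_filter.1 hx).2)
    have h2 : ∑ x ∈ L, Z * a x ≤ Z * (C * n) := by
      rw [← mul_sum]
      exact Nat.mul_le_mul_left _ ((sum_le_sum_of_subset (subset_univ L)).trans hsum)
    have h3 : L.card * n ≤ M * n := by rw [hM, mul_assoc]; exact h1.trans h2
    exact Nat.le_of_mul_le_mul_right h3 hnpos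
  -- sum of degrees in L
  have hLsum : ∑ x ∈ L, a x ≤ t * n + K := by
    have h1 : ∑ x ∈ L, a x = ∑ y, (L.filter (fun x => r y x)).card := by
      simp only [ha, dg, card_filter]
      rw [sum_comm]
      refine sum_congr rfl fun y _ => sum_congr rfl fun x _ => ?_
      congr 1
      exact propext ⟨hsym _ _, hsym _ _⟩
    rw [h1]
    set Y := univ.filter (fun y => t + 1 ≤ (L.filter (fun x => r y x)).card) with hY
    have hYb : Y.card ≤ t * 2^L.card := Y_bound hsym t L hK
    calc ∑ y, (L.filter (fun x => r y x)).card ≤ ∑ y : V, (t + if y ∈ Y then M else 0) := by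
          refine sum_le_sum fun y _ => ?_
          split_ifs with hy
          · exact (card_filter_le _ _).trans (hLM.trans (by omega))
          · have : ¬ (t + 1 ≤ (L.filter (fun x => r y x)).card) := by simpa [hY] using hy
            omega
      _ = t * n + Y.card * M := by
          rw [sum_add_distrib]
          simp [hn, mul_comm]
      _ ≤ t * n + K := by
          rw [hKdef, mul_comm Y.card]
          have : Y.card ≤ t * 2^M :=
            hYb.trans (Nat.mul_le_mul_left _ (Nat.pow_le_pow_right (by norm_num) hLM))
          gcongr
  -- reals
  have hnR : (0:ℝ) < n := by exact_mod_cast hnpos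
  have hQ'pos : (0:ℝ) < Q' := by rw [hQ']; positivity
  have hZpos : (0:ℝ) < Z := by rw [hZ]; positivity
  have hZR : (Z:ℝ) = 2 * Q' * C + 1 := by rw [hZ]; push_cast; ring
  have haR : ∀ x, (a x : ℝ) ≤ n := fun x => by exact_mod_cast han x
  have hcompl : (Z:ℝ)^2 * ∑ x ∈ Lᶜ, (a x : ℝ)^(p+3) ≤ C * (n:ℝ)^(p+3) := by
    have h1 : ∀ x ∈ Lᶜ, (Z:ℝ)^2 * (a x : ℝ)^(p+3) ≤ a x * (n:ℝ)^(p+2) := by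
      intro x hx
      have hx' : (Z:ℝ) * a x ≤ n := by
        have : ¬ (n ≤ Z * a x) := by simpa [hL] using hx
        exact_mod_cast (not_le.1 this).le
      have h0 : (0:ℝ) ≤ a x := Nat.cast_nonneg _
      calc (Z:ℝ)^2 * (a x : ℝ)^(p+3) = a x * ((a x:ℝ)^p * (Z * a x)^2) := by ring
        _ ≤ a x * ((n:ℝ)^p * (n:ℝ)^2) := by
            gcongr
            exact han x
        _ = a x * (n:ℝ)^(p+2) := by ring
    have h2 : (∑ x ∈ Lᶜ, (a x:ℝ)) ≤ C * n := by
      have : ∑ x ∈ Lᶜ, a x ≤ C * n := (sum_le_sum_of_subset (subset_univ _)).trans hsum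
      exact_mod_cast this
    calc _ = ∑ x ∈ Lᶜ, (Z:ℝ)^2 * (a x : ℝ)^(p+3) := by rw [mul_sum]
      _ ≤ ∑ x ∈ Lᶜ, (a x:ℝ) * (n:ℝ)^(p+2) := sum_le_sum h1
      _ = (∑ x ∈ Lᶜ, (a x:ℝ)) * (n:ℝ)^(p+2) := by rw [sum_mul]
      _ ≤ (C * n) * (n:ℝ)^(p+2) := by gcongr
      _ = _ := by ring
  have hpowR : (t:ℝ) * (n:ℝ)^(p+3) ≤ ∑ x ∈ L, (a x:ℝ)^(p+3) + ∑ x ∈ Lᶜ, (a x:ℝ)^(p+3)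
      + C' * (n:ℝ)^(p+2) := by
    rw [sum_add_sum_compl]
    exact_mod_cast hpow
  have hLsumR : ∑ x ∈ L, (a x:ℝ) ≤ t * n + K := by exact_mod_cast hLsum
  have hn2pos : (0:ℝ) < (n:ℝ)^(p+2) := by positivity
  have hcompl2 : ∑ x ∈ Lᶜ, (a x : ℝ)^(p+3) ≤ (C / Z^2 * n) * (n:ℝ)^(p+2) := by
    have : (C / Z^2 * n) * (n:ℝ)^(p+2) = (C * (n:ℝ)^(p+3)) / Z^2 := by
      field_simp; ring
    rw [this, le_div_iff₀ (by positivity)]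
    linarith [hcompl]
  -- each degree in L is almost full
  have hfull : ∀ x ∈ L, (n:ℝ) - a x ≤ n / Q' := by
    intro x hx
    have hterm : ∀ z ∈ L, 0 ≤ (a z:ℝ) * (n:ℝ)^(p+2) - (a z:ℝ)^(p+3) := by
      intro z _
      have : (a z:ℝ)^(p+3) = a z * (a z:ℝ)^(p+2) := by ring
      rw [this, ← mul_sub]
      apply mul_nonneg (Nat.cast_nonneg _)
      rw [sub_nonneg]
      gcongr
      exact han z
    have h1 := single_le_sum hterm hx
    rw [sum_sub_distrib, ← sum_mul] at h1
    have h2 : (∑ x ∈ L, (a x:ℝ)) * (n:ℝ)^(p+2) ≤ (t * n + K) * (n:ℝ)^(p+2) := by gcongr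
    have h3 : (a x:ℝ) * (n - a x) * (n:ℝ)^(p+1) ≤ (a x:ℝ) * (n:ℝ)^(p+2) - (a x:ℝ)^(p+3) := by
      have h4 : (a x:ℝ)^(p+3) ≤ a x * a x * (n:ℝ)^(p+1) := by
        have : (a x:ℝ)^(p+3) = a x * a x * (a x:ℝ)^(p+1) := by ring
        rw [this]
        gcongr
        exact han x
      have : (a x:ℝ) * (n - a x) * (n:ℝ)^(p+1) = (a x:ℝ) * (n:ℝ)^(p+2) - a x * a x * (n:ℝ)^(p+1) := by ring
      linarith
    have h5 : (n:ℝ) ≤ Z * a x := by exact_mod_cast (mem_filter.1 hx).2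
    have h6 : ((n:ℝ) - a x) * (n:ℝ)^(p+2) ≤ Z * ((a x:ℝ) * (n - a x) * (n:ℝ)^(p+1)) := by
      have h0 : 0 ≤ (n:ℝ) - a x := by linarith [haR x]
      calc ((n:ℝ) - a x) * (n:ℝ)^(p+2) = n * ((n - a x) * (n:ℝ)^(p+1)) := by ring
        _ ≤ (Z * a x) * ((n - a x) * (n:ℝ)^(p+1)) := by gcongr
        _ = _ := by ring
    have h7 : (t:ℝ) * (n:ℝ)^(p+3) = t * n * (n:ℝ)^(p+2) := by ring
    have h8 : (a x:ℝ) * (n - a x) * (n:ℝ)^(p+1) ≤ (K + C' + C / Z^2 * n) * (n:ℝ)^(p+2) := by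
      rw [h7] at hpowR
      linarith [h1, h2, h3, hpowR, hcompl2]
    have h9 : ((n:ℝ) - a x) * (n:ℝ)^(p+2) ≤ (Z * (K + C' + C / Z^2 * n)) * (n:ℝ)^(p+2) := by
      calc _ ≤ _ := h6
        _ ≤ Z * ((K + C' + C / Z^2 * n) * (n:ℝ)^(p+2)) := by gcongr
        _ = _ := by ring
    have h10 := le_of_mul_le_mul_right h9 hn2pos
    refine h10.trans ?_
    rw [le_div_iff₀ hQ'pos]
    have e : (Z:ℝ) * (K + C' + C / Z^2 * n) * Q' = Q' * Z * (K + C') + Q' * C * n / Z := by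
      field_simp
    rw [e]
    have f1 : (2:ℝ) * Q' * Z * (K + C') ≤ n := by exact_mod_cast hn1
    have f2 : (Q':ℝ) * C * n / Z ≤ n / 2 := by
      rw [div_le_iff₀ hZpos, hZR]
      nlinarith
    linarith
  have hQ'R : (Q':ℝ) = 2 * (t+1) * (Q+1) := by rw [hQ']; push_cast; ring
  have hLt : L.card ≤ t := by
    by_contra hcon
    push Not at hcon
    have hc : ((t:ℝ) + 1) ≤ L.card := by exact_mod_cast hcon
    have h1 : (L.card : ℝ) * (n - n / Q') ≤ ∑ x ∈ L, (a x:ℝ) := by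
      rw [← nsmul_eq_mul]
      exact card_nsmul_le_sum _ _ _ (fun x hx => by linarith [hfull x hx])
    have h2 : (n:ℝ) / Q' * (t + 1) ≤ n / 2 := by
      rw [div_mul_eq_mul_div, div_le_iff₀ hQ'pos, hQ'R]
      have : (0:ℝ) ≤ n * (t+1) * Q := by positivity
      nlinarith
    have h3 : 0 ≤ (n:ℝ) - n / Q' := by
      have : (n:ℝ) / Q' * 1 ≤ (n:ℝ) / Q' * (t+1) := by gcongr; linarith [(Nat.cast_nonneg t : (0:ℝ) ≤ t)]
      linarith
    have h4 : ((t:ℝ)+1) * (n - n / Q') ≤ (L.card : ℝ) * (n - n / Q') := by gcongr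
    have h5 : (2:ℝ) * K < n := by exact_mod_cast hn2
    nlinarith
  have hLt' : t ≤ L.card := by
    by_contra hcon
    push Not at hcon
    have hc : (L.card : ℝ) + 1 ≤ t := by exact_mod_cast hcon
    have h1 : ∑ x ∈ L, (a x:ℝ)^(p+3) ≤ L.card * (n:ℝ)^(p+3) := by
      rw [← nsmul_eq_mul]
      apply sum_le_card_nsmul
      intro x _
      gcongr
      exact han x
    have h2 : ((L.card:ℝ) + 1) * (n:ℝ)^(p+3) ≤ t * (n:ℝ)^(p+3) := by gcongr
    have h3 : (n:ℝ) * (n:ℝ)^(p+2) ≤ (C / Z^2 * n + C') * (n:ℝ)^(p+2) := by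
      have : (n:ℝ) * (n:ℝ)^(p+2) = (n:ℝ)^(p+3) := by ring
      rw [this]
      linarith
    have h4 := le_of_mul_le_mul_right h3 hn2pos
    have h5 : (2:ℝ) * C' < n := by exact_mod_cast hn3
    have h6 : (C:ℝ) / Z^2 * n ≤ n / 2 := by
      have hQ1 : (1:ℝ) ≤ Q' := by
        exact_mod_cast (Nat.cast_pos.1 hQ'pos : 0 < Q')
      have hC0 : (0:ℝ) ≤ C := Nat.cast_nonneg _
      have hZ1 : (1:ℝ) ≤ Z := by rw [hZR]; nlinarith [mul_nonneg hQ'pos.le hC0]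
      have hZC : 2 * (C:ℝ) ≤ Z := by rw [hZR]; nlinarith
      have : (C:ℝ) / Z^2 ≤ 1/2 := by
        rw [div_le_iff₀ (by positivity)]; nlinarith
      nlinarith
    linarith
  refine ⟨L, le_antisymm hLt hLt', univ.filter (fun v => ∀ x ∈ L, r x v), by simp, ?_⟩
  have hsub : (univ.filter (fun v => ∀ x ∈ L, r x v))ᶜ ⊆ L.biUnion (fun x => (univ.filter (fun y => r x y))ᶜ) := by
    intro v hv
    simp only [mem_compl, mem_filter, mem_univ, true_and] at hv
    push Not at hv
    obtain ⟨x, hx, hxv⟩ := hv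
    rw [mem_biUnion]
    exact ⟨x, hx, by simpa using hxv⟩
  have hb : ((univ.filter (fun v => ∀ x ∈ L, r x v))ᶜ.card : ℝ) ≤ t * (n / Q') := by
    have h1 := (card_le_card hsub).trans card_biUnion_le
    have h2 : ∀ x ∈ L, ((univ.filter (fun y => r x y))ᶜ.card : ℝ) ≤ n / Q' := by
      intro x hx
      rw [card_compl, hn, Nat.cast_sub (by rw [← hn]; exact card_le_univ _)]
      exact hfull x hx
    calc _ ≤ ((∑ x ∈ L, (univ.filter (fun y => r x y))ᶜ.card : ℕ) : ℝ) := by exact_mod_cast h1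
      _ = ∑ x ∈ L, ((univ.filter (fun y => r x y))ᶜ.card : ℝ) := by push_cast; rfl
      _ ≤ L.card • ((n:ℝ) / Q') := sum_le_card_nsmul _ _ _ h2
      _ = L.card * ((n:ℝ) / Q') := by rw [nsmul_eq_mul]
      _ ≤ t * ((n:ℝ) / Q') := by gcongr
  have : (Q:ℝ) * ((univ.filter (fun v => ∀ x ∈ L, r x v))ᶜ.card : ℝ) ≤ n := by
    calc _ ≤ (Q:ℝ) * (t * (n / Q')) := by gcongr
      _ = (Q * t * n) / Q' := by ring
      _ ≤ n := by
        rw [div_le_iff₀ hQ'pos, hQ'R]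
        have h1 : (0:ℝ) ≤ n * t * Q := by positivity
        have h2 : (0:ℝ) ≤ n * t := by positivity
        have h3 : (0:ℝ) ≤ n * Q := by positivity
        nlinarith
  exact_mod_cast this

end G

section Fin1

variable {V : Type} [Fintype V] [DecidableEq V] {k : ℕ}

def meet (k : ℕ) (T : Finset V) : Finset (Finset V) :=
  (univ.powersetCard k).filter (fun E => ¬ Disjoint E T)

lemma mem_meet {T E : Finset V} : E ∈ meet k T ↔ E.card = k ∧ ¬ Disjoint E T := by
  simp [meet, mem_powersetCard]

lemma meet_card (T : Finset V) :
    (meet k T).card + (Fintype.card V - T.card).choose k = (Fintype.card V).choose k := by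
  have h := card_filter_add_card_filter_not (s := (univ : Finset V).powersetCard k) (fun E => Disjoint E T)
  have h2 : ((univ : Finset V).powersetCard k).filter (fun E => Disjoint E T) = Tᶜ.powersetCard k := by
    ext E
    simp only [mem_filter, mem_powersetCard, subset_univ, true_and]
    rw [subset_compl_iff_disjoint_right, and_comm]
  rw [h2, card_powersetCard, card_powersetCard, card_compl, card_univ] at h
  rw [meet, ← h, add_comm]

lemma sum_identity (n k : ℕ) (hk : 1 ≤ k) (t : ℕ) (ht : t ≤ n) :
    ∑ i ∈ Icc 1 t, (n - i).choose (k-1) + (n - t).choose k = n.choose k := by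
  induction t with
  | zero => simp
  | succ t ih =>
    rw [sum_Icc_succ_top (by omega), ← ih (by omega)]
    obtain ⟨k', rfl⟩ : ∃ k', k = k' + 1 := ⟨k - 1, by omega⟩
    have : n - t = (n - (t+1)) + 1 := by omega
    rw [this, Nat.choose_succ_succ, Nat.add_sub_cancel]
    simp only [Nat.succ_eq_add_one]
    ring

lemma meet_no_path {n : ℕ} {t : ℕ} (T : Finset (Fin n)) (hT : T.card = t) :
    ¬ ContainsLinearPath k (2 * t + 1) (meet k T) := by
  rintro ⟨P, _, h2, _, _, h5⟩
  have hx : ∀ i : Fin (t+1), ∃ x, x ∈ P ⟨2 * i, by omega⟩ ∧ x ∈ T := by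
    intro i
    have := (mem_meet.1 (h2 ⟨2 * i, by omega⟩)).2
    exact not_disjoint_iff.1 this
  choose f hf using hx
  have hinj : ∀ i j : Fin (t+1), i < j → f i ≠ f j := by
    intro i j hij he
    have := h5 ⟨2 * i, by omega⟩ ⟨2 * j, by omega⟩ (by
      have : (i:ℕ) < j := hij
      simp only; omega)
    have h : f i ∈ (∅ : Finset (Fin n)) := by
      rw [← this, mem_inter]; exact ⟨(hf i).1, by rw [he]; exact (hf j).1⟩
    simp at h
  have hinj2 : Function.Injective f := by
    intro i j hij
    rcases lt_trichotomy i j with h | h | h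
    · exact absurd hij (hinj _ _ h)
    · exact h
    · exact absurd hij.symm (hinj _ _ h)
  have : (univ.image f).card ≤ T.card := card_le_card (by
    intro x hx
    obtain ⟨i, _, rfl⟩ := mem_image.1 hx
    exact (hf i).2)
  rw [card_image_of_injective _ hinj2, card_univ, Fintype.card_fin] at this
  omega

lemma kfree {s t : ℕ} {H : Finset (Finset V)} (hH : ∀ E ∈ H, E.card = k)
    (hs : 2 * (2*t+1) * k ≤ s) (hP : ¬ HasPath (2*t+1) H) (X Y : Finset V) (hX : X.card = t+1)
    (hY : Y.card = t+1) : ¬ ∀ x ∈ X, ∀ y ∈ Y, KAdj s H x y := by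
  intro h
  obtain ⟨f, hf1, hf2⟩ := exists_enum X (card_pos.1 (by omega)) (t+1) hX.ge
  obtain ⟨g, hg1, hg2⟩ := exists_enum Y (card_pos.1 (by omega)) (t+1) hY.ge
  obtain ⟨v, _, _, _, hv1, hv2⟩ := altPath (r := KAdj s H) (fun x h => h.1 rfl)
    (fun x y h => h.symm) f g (t+1) (t+1) hf2 hg2
    (fun i j => h _ (hf1 i) _ (hg1 j)) (2*t+1) (by omega) (by omega)
  exact hP (graphPath hH v hs hv1 hv2)

lemma H0_sub {s t : ℕ} {H : Finset (Finset V)} (hH : ∀ E ∈ H, E.card = k) (ht : 1 ≤ t)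
    (hs : 2 * (2*t+1) * k ≤ s) (hP : ¬ HasPath (2*t+1) H) (T N : Finset V) (hT : T.card = t)
    (hN : ∀ v ∈ N, ∀ x ∈ T, KAdj s H x v) (hNc : t + k ≤ N.card)
    (E : Finset V) (hE : E ∈ H) (hET : Disjoint E T) (y : V) (hyE : y ∈ E) : y ∉ N := by
  intro hyN
  have hc : t ≤ (N \ E).card := by
    have := le_card_sdiff E N
    rw [hH E hE] at this
    omega
  obtain ⟨f, hf1, hf2⟩ := exists_enum (N \ E) (card_pos.1 (by omega)) t hc
  obtain ⟨g, hg1, hg2⟩ := exists_enum T (card_pos.1 (by omega)) t hT.ge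
  have hf1' : ∀ i, f i ∈ N ∧ f i ∉ E := fun i => mem_sdiff.1 (hf1 i)
  obtain ⟨v, hv0, _, hv3, hv1, hv2⟩ := altPath (r := KAdj s H) (fun x h => h.1 rfl)
    (fun x y h => h.symm) (fun i => if i = 0 then y else f (i-1)) g (t+1) t
    (by
      intro i hi j hj
      split_ifs with h1 h2 h2
      · omega
      · intro h; exact absurd hyE (by rw [h]; exact (hf1' _).2)
      · intro h; exact absurd hyE (by rw [← h]; exact (hf1' _).2)
      · intro h; have := hf2 _ (by omega) _ (by omega) h; omega) hg2
    (by
      intro i j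
      split_ifs
      · exact (hN y hyN _ (hg1 j)).symm
      · exact (hN _ (hf1' _).1 _ (hg1 j)).symm) (2*t) (by omega) (by omega)
  apply hP
  refine graphPath' hH v hE ?_ ?_ hs hv1 hv2
  · rw [hv0]; simpa using hyE
  · intro i hi hi1
    rcases hv3 i hi hi1 with ⟨h1, h2, _⟩ | h
    · rw [h1, if_neg (by omega)]; exact (hf1' _).2
    · rw [h]; intro h'; exact disjoint_left.1 hET h' (hg1 _)

lemma nonker_bound {s : ℕ} {H : Finset (Finset V)} (hH : ∀ E ∈ H, E.card = k) (hk : 3 ≤ k) {x z : V}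
    (hxz : x ≠ z) (hK : ¬ Ker s H {x, z}) :
    (H.filter (fun E => x ∈ E ∧ z ∈ E)).card ≤ s * (Fintype.card V)^(k-3) := by
  simp only [Ker] at hK
  push Not at hK
  obtain ⟨S, hS, hS2⟩ := hK
  have hsub : H.filter (fun E => x ∈ E ∧ z ∈ E) ⊆
      S.biUnion (fun y => (univ.powersetCard (k-3)).image (fun A => insert x (insert z (insert y A)))) := by
    intro E hE
    rw [mem_filter] at hE
    obtain ⟨hE, hx, hz⟩ := hE
    obtain ⟨y, hy, hyS, hy2⟩ := hS2 E hE (by simp [insert_subset_iff, hx, hz])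
    simp only [mem_insert, mem_singleton, not_or] at hy2
    rw [mem_biUnion]
    refine ⟨y, hyS, mem_image.2 ⟨((E.erase x).erase z).erase y, ?_, ?_⟩⟩
    · have hz' : z ∈ E.erase x := mem_erase.2 ⟨hxz.symm, hz⟩
      have hy' : y ∈ (E.erase x).erase z := mem_erase.2 ⟨hy2.2, mem_erase.2 ⟨hy2.1, hy⟩⟩
      rw [mem_powersetCard]
      refine ⟨subset_univ _, ?_⟩
      rw [card_erase_of_mem hy', card_erase_of_mem hz', card_erase_of_mem hx, hH E hE]
      omega
    · have hz' : z ∈ E.erase x := mem_erase.2 ⟨hxz.symm, hz⟩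
      have hy' : y ∈ (E.erase x).erase z := mem_erase.2 ⟨hy2.2, mem_erase.2 ⟨hy2.1, hy⟩⟩
      rw [insert_erase hy', insert_erase hz', insert_erase hx]
  calc _ ≤ _ := card_le_card hsub
    _ ≤ S.card * (Fintype.card V)^(k-3) := by
      apply card_biUnion_le_card_mul
      intro y _
      refine card_image_le.trans ?_
      rw [card_powersetCard, card_univ]
      exact Nat.choose_le_pow _ _
    _ ≤ _ := Nat.mul_le_mul_right _ hS

lemma final_step {s t : ℕ} {H : Finset (Finset V)} (hk : 4 ≤ k) (hH : ∀ E ∈ H, E.card = k) (ht : 1 ≤ t)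
    (hs1 : 1 ≤ s)
    (hs : 2 * (2*t+1) * k ≤ s) (hP : ¬ HasPath (2*t+1) H) (T N : Finset V) (hT : T.card = t)
    (hN : ∀ v, v ∈ N ↔ ∀ x ∈ T, KAdj s H x v) (hNc : t + k ≤ N.card)
    (hineq : CC k s * Nᶜ.card^(k-2) + s * (Fintype.card V)^(k-3) ≤ N.card.choose (k-2)) :
    H.card ≤ (meet k T).card := by
  classical
  have hNT : ∀ v ∈ N, v ∉ T := fun v hv hvT => ((hN v).1 hv v hvT).1 rfl
  set W := (N ∪ T)ᶜ with hW
  have hWN : W.card ≤ Nᶜ.card := card_le_card (by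
    rw [hW, compl_union]; exact inter_subset_left)
  set H0 := H.filter (fun E => Disjoint E T) with hH0
  have hH0b : H0.card ≤ W.card * (CC k s * Nᶜ.card^(k-2)) := by
    have := generic_bound hk hs1 hs H0 (fun E hE => hH E (filter_subset _ _ hE))
      (fun h => hP (h.mono (filter_subset _ _))) W (by
        intro E hE y hy
        rw [hH0, mem_filter] at hE
        rw [hW, mem_compl, mem_union, not_or]
        exact ⟨H0_sub hH ht hs hP T N hT (fun v hv => (hN v).1 hv) hNc E hE.1 hE.2 y hy,
          disjoint_left.1 hE.2 hy⟩)
    refine this.trans ?_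
    have e : k - 1 = (k - 2) + 1 := by omega
    rw [e, pow_succ]
    calc CC k s * (W.card^(k-2) * W.card) = W.card * (CC k s * W.card^(k-2)) := by ring
      _ ≤ _ := by gcongr
  have hWz : ∀ z ∈ W, ∃ x ∈ T, ¬ Ker s H {x, z} ∧ x ≠ z := by
    intro z hz
    rw [hW, mem_compl, mem_union, not_or, hN] at hz
    obtain ⟨hz1, hz2⟩ := hz
    push Not at hz1
    obtain ⟨x, hx, hxz⟩ := hz1
    have hne : x ≠ z := by rintro rfl; exact hz2 hx
    exact ⟨x, hx, fun h => hxz ⟨hne, h⟩, hne⟩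
  choose! c hc using hWz
  let A : V → Finset (Finset V) := fun z =>
    (N.powersetCard (k-2)).image (fun S => insert (c z) (insert z S))
  have hA : ∀ z ∈ W, ∀ G ∈ A z, G.card = k ∧ c z ∈ G ∧ z ∈ G ∧ ∀ w ∈ G, w ∈ W → w = z := by
    intro z hz G hG
    obtain ⟨S, hS, rfl⟩ := mem_image.1 hG
    rw [mem_powersetCard] at hS
    have hz' := hz
    rw [hW, mem_compl, mem_union, not_or] at hz'
    have h1 : z ∉ S := fun h => hz'.1 (hS.1 h)
    have h2 : c z ∉ insert z S := by
      rw [mem_insert, not_or]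
      exact ⟨(hc z hz).2.2, fun h => hNT _ (hS.1 h) (hc z hz).1⟩
    refine ⟨?_, by simp, by simp, ?_⟩
    · rw [card_insert_of_notMem h2, card_insert_of_notMem h1, hS.2]; omega
    · intro w hw hwW
      rw [hW, mem_compl, mem_union, not_or] at hwW
      rw [mem_insert, mem_insert] at hw
      rcases hw with rfl | rfl | h
      · exact absurd (hc z hz).1 hwW.2
      · rfl
      · exact absurd (hS.1 h) hwW.1
  have hAc : ∀ z ∈ W, (A z).card = N.card.choose (k-2) := by
    intro z hz
    have hz' := hz
    rw [hW, mem_compl, mem_union, not_or] at hz'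
    rw [card_image_of_injOn, card_powersetCard]
    intro S hS S' hS' he
    have hS := (mem_powersetCard.1 (mem_coe.1 hS)).1
    have hS' := (mem_powersetCard.1 (mem_coe.1 hS')).1
    have aux : ∀ S ⊆ N, (insert (c z) (insert z S)) ∩ N = S := by
      intro S hS
      ext w
      rw [mem_inter, mem_insert, mem_insert]
      constructor
      · rintro ⟨rfl | rfl | h, h2⟩
        · exact absurd (hc z hz).1 (hNT _ h2)
        · exact absurd h2 hz'.1
        · exact h
      · intro h; exact ⟨Or.inr (Or.inr h), hS h⟩
    rw [← aux S hS, ← aux S' hS']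
    dsimp only at he
    rw [he]
  have hB : ∀ z ∈ W, CC k s * Nᶜ.card^(k-2) ≤ (A z \ H).card := by
    intro z hz
    have h1 := nonker_bound hH (by omega) (hc z hz).2.2 (hc z hz).2.1
    have h2 : (A z ∩ H).card ≤ (H.filter (fun E => c z ∈ E ∧ z ∈ E)).card := card_le_card (by
      intro G hG
      rw [mem_inter] at hG
      rw [mem_filter]
      exact ⟨hG.2, (hA z hz G hG.1).2.1, (hA z hz G hG.1).2.2.1⟩)
    have h3 := card_sdiff_add_card_inter (A z) H
    rw [hAc z hz] at h3
    omega
  have hdisj : (W : Set V).PairwiseDisjoint (fun z => A z \ H) := by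
    intro z hz z' hz' hne
    rw [Function.onFun, disjoint_left]
    intro G hG hG'
    rw [mem_sdiff] at hG hG'
    exact hne ((hA z' hz' G hG'.1).2.2.2 z (hA z hz G hG.1).2.2.1 hz)
  have hmiss : W.card * (CC k s * Nᶜ.card^(k-2)) ≤ (meet k T \ H).card := by
    calc _ ≤ ∑ z ∈ W, (A z \ H).card := by
          rw [← smul_eq_mul]; exact card_nsmul_le_sum _ _ _ hB
      _ = (W.biUnion (fun z => A z \ H)).card := (card_biUnion hdisj).symm
      _ ≤ _ := card_le_card (by
        intro G hG
        obtain ⟨z, hz, hG⟩ := mem_biUnion.1 hG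
        rw [mem_sdiff] at hG ⊢
        refine ⟨mem_meet.2 ⟨(hA z hz G hG.1).1, ?_⟩, hG.2⟩
        exact not_disjoint_iff.2 ⟨c z, (hA z hz G hG.1).2.1, (hc z hz).1⟩)
  have h1 : H0.card + (H.filter (fun E => ¬ Disjoint E T)).card = H.card := by
    rw [hH0]
    convert card_filter_add_card_filter_not (s := H) (fun E => Disjoint E T)
  have h2 : (H.filter (fun E => ¬ Disjoint E T)).card ≤ (meet k T ∩ H).card := card_le_card (by
    intro G hG
    rw [mem_filter] at hG
    rw [mem_inter, mem_meet]
    exact ⟨⟨hH G hG.1, hG.2⟩, hG.1⟩)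
  have h3 := card_sdiff_add_card_inter (meet k T) H
  omega

lemma pow_add_bound (m c q : ℕ) : (m + c)^q ≤ m^q + q * c * (m+c)^(q-1) := by
  induction q with
  | zero => simp
  | succ q ih =>
    rcases q with _ | q
    · simp
    · simp only [Nat.add_sub_cancel] at ih ⊢
      calc (m+c)^(q+1+1) = (m+c) * (m+c)^(q+1) := by ring
        _ ≤ (m+c) * (m^(q+1) + (q+1)*c*(m+c)^q) := by gcongr
        _ = m^(q+1+1) + c * m^(q+1) + (q+1) * c * (m+c)^(q+1) := by ring
        _ ≤ m^(q+1+1) + c * (m+c)^(q+1) + (q+1) * c * (m+c)^(q+1) := by gcongr; omega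
        _ = _ := by ring

lemma degree_pow {s t n : ℕ} {H : Finset (Finset V)} (hk : 4 ≤ k) (hH : ∀ E ∈ H, E.card = k)
    (hs1 : 1 ≤ s) (hs : 2 * (2*t+1) * k ≤ s) (hP : ¬ HasPath (2*t+1) H)
    (hn : Fintype.card V = n) (hnt : t + k ≤ n)
    (hlarge : ∑ i ∈ Icc 1 t, (n - i).choose (k-1) ≤ H.card) :
    t * n^(k-1) ≤ ∑ x, (dg (KAdj s H) x)^(k-1)
      + (t * ((k-1) * (t+k)) + (k-1).factorial * CC k s) * n^(k-1-1) := by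
  have h1 := count_bound hk hs1 hs H hH hP
  rw [hn] at h1
  have h2 : t * (n - (t+k))^(k-1) ≤ (k-1).factorial * ∑ i ∈ Icc 1 t, (n - i).choose (k-1) := by
    rw [mul_sum]
    have e0 : t * (n - (t+k))^(k-1) = ∑ i ∈ Icc 1 t, (n - (t+k))^(k-1) := by simp
    rw [e0]
    apply sum_le_sum
    intro i hi
    rw [mem_Icc] at hi
    rw [← Nat.descFactorial_eq_factorial_mul_choose]
    refine le_trans ?_ (Nat.pow_sub_le_descFactorial _ _)
    apply Nat.pow_le_pow_left
    omega
  have h3 : (k-1).factorial * ∑ x, (dg (KAdj s H) x).choose (k-1) ≤ ∑ x, (dg (KAdj s H) x)^(k-1) := by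
    rw [mul_sum]
    apply sum_le_sum
    intro x _
    rw [← Nat.descFactorial_eq_factorial_mul_choose]
    exact Nat.descFactorial_le_pow _ _
  have h4 := pow_add_bound (n - (t+k)) (t+k) (k-1)
  rw [Nat.sub_add_cancel hnt] at h4
  have e : k - 1 - 1 = k - 2 := by omega
  rw [e] at h4 ⊢
  calc t * n^(k-1) ≤ t * ((n - (t+k))^(k-1) + (k-1) * (t+k) * n^(k-2)) := by gcongr
    _ = t * (n - (t+k))^(k-1) + t * ((k-1) * (t+k)) * n^(k-2) := by ring
    _ ≤ (k-1).factorial * (CC k s * n^(k-2) + ∑ x, (dg (KAdj s H) x).choose (k-1))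
        + t * ((k-1) * (t+k)) * n^(k-2) := by
          exact Nat.add_le_add_right (h2.trans (Nat.mul_le_mul_left _ (hlarge.trans h1))) _
    _ = (k-1).factorial * ∑ x, (dg (KAdj s H) x).choose (k-1) +
        (t * ((k-1) * (t+k)) + (k-1).factorial * CC k s) * n^(k-2) := by ring
    _ ≤ _ := by gcongr

lemma final_ineq (k C0 s : ℕ) (hk : 4 ≤ k) (Q n w N : ℕ)
    (hQ : 2 * 4^(k-2) * (k-2).factorial * C0 + 2 ≤ Q) (hw : Q * w ≤ n) (hN : N + w = n)
    (hn : 2 * 4^(k-2) * (k-2).factorial * s ≤ n) (hnk : 4 * k ≤ n) :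
    C0 * w^(k-2) + s * n^(k-3) ≤ N.choose (k-2) := by
  have h2w : 2 * w ≤ n := (Nat.mul_le_mul_right w (by omega)).trans hw
  have h4N : n ≤ 4 * (N + 1 - (k-2)) := by omega
  set d := k - 2 with hd
  have e : k - 3 = d - 1 := by omega
  rw [e]
  have h1 : n^d ≤ 4^d * (d.factorial * N.choose d) := by
    calc n^d ≤ (4 * (N+1-d))^d := Nat.pow_le_pow_left h4N _
      _ = 4^d * (N+1-d)^d := by rw [mul_pow]
      _ ≤ _ := by
        rw [← Nat.descFactorial_eq_factorial_mul_choose]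
        exact Nat.mul_le_mul_left _ (Nat.pow_sub_le_descFactorial _ _)
  have h2 : 2 * 4^d * d.factorial * C0 * w^d ≤ n^d := by
    calc _ ≤ Q * w^d := Nat.mul_le_mul_right _ (by omega)
      _ ≤ Q^d * w^d := Nat.mul_le_mul_right _ (Nat.le_self_pow (by omega) Q)
      _ = (Q*w)^d := by rw [mul_pow]
      _ ≤ n^d := Nat.pow_le_pow_left hw _
  have h3 : 2 * 4^d * d.factorial * s * n^(d-1) ≤ n^d := by
    calc _ ≤ n * n^(d-1) := Nat.mul_le_mul_right _ hn
      _ = n^d := by rw [← pow_succ']; congr 1; omega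
  have h4 : (2 * 4^d * d.factorial) * (C0 * w^d + s * n^(d-1)) ≤ (2 * 4^d * d.factorial) * N.choose d := by
    calc _ = 2 * 4^d * d.factorial * C0 * w^d + 2 * 4^d * d.factorial * s * n^(d-1) := by ring
      _ ≤ n^d + n^d := add_le_add h2 h3
      _ ≤ 4^d * (d.factorial * N.choose d) + 4^d * (d.factorial * N.choose d) := add_le_add h1 h1
      _ = _ := by ring
  exact Nat.le_of_mul_le_mul_left h4 (by positivity)

end Fin1

/-- F\"uredi–Jiang–Seiver: for k ≥ 4, t ≥ 1 and all sufficiently large n, the Turán number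
of the k-uniform linear path of length 2t+1 is C(n-1,k-1)+⋯+C(n-t,k-1). -/
theorem turan_linear_path_odd (k t : ℕ) (hk : 4 ≤ k) (ht : 1 ≤ t) :
    ∃ n₀ : ℕ, ∀ n : ℕ, n₀ ≤ n →
      IsGreatest {m : ℕ | ∃ F : Finset (Finset (Fin n)),
          (∀ A ∈ F, A.card = k) ∧ ¬ ContainsLinearPath k (2 * t + 1) F ∧ F.card = m}
        (∑ i ∈ Finset.Icc 1 t, (n - i).choose (k - 1)) := by
  classical
  obtain ⟨s, hsdef⟩ : ∃ s, s = 2 * (2*t+1) * k := ⟨_, rfl⟩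
  have hs : 2 * (2*t+1) * k ≤ s := hsdef.ge
  have hs1 : 1 ≤ s := by rw [hsdef]; exact Nat.mul_pos (by omega) (by omega)
  obtain ⟨Q, hQ⟩ : ∃ Q, Q = 2 * 4^(k-2) * (k-2).factorial * CC k s + 2 := ⟨_, rfl⟩
  obtain ⟨n1, hn1⟩ := graph_lemma t (k-1) (2 * (2*t+1))
    (t * ((k-1) * (t+k)) + (k-1).factorial * CC k s) Q ht (by omega)
  refine ⟨n1 + 2 * 4^(k-2) * (k-2).factorial * s + 4 * k + 4 * t, ?_⟩
  intro n hn
  have hmeet : ∀ T : Finset (Fin n), T.card = t →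
      (meet k T).card = ∑ i ∈ Finset.Icc 1 t, (n - i).choose (k - 1) := by
    intro T hT
    have h1 := meet_card (k := k) T
    have h2 := sum_identity n k (by omega) t (by omega)
    rw [Fintype.card_fin, hT] at h1
    omega
  constructor
  · obtain ⟨T, _, hT⟩ := exists_subset_card_eq (s := (univ : Finset (Fin n))) (n := t)
      (by rw [card_univ, Fintype.card_fin]; omega)
    exact ⟨meet k T, fun A hA => (mem_meet.1 hA).1, meet_no_path T hT, hmeet T hT⟩
  · rintro m ⟨H, hH, hnP, rfl⟩
    by_contra hcon
    push Not at hcon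
    have hP : ¬ HasPath (2*t+1) H := fun h => hnP (h.contains (by omega) hH)
    have hsum : ∑ x, dg (KAdj s H) x ≤ 2 * (2*t+1) * n := by
      have := erdos_gallai (r := KAdj s H) (fun x h => h.1 rfl) (fun x y h => h.symm) (2*t+1)
        (by
          rintro ⟨v, hv1, hv2⟩
          exact hP (graphPath hH v hs hv1 hv2)) n univ (by simp)
      refine le_trans (le_of_eq ?_) this
      apply sum_congr rfl
      intro x _
      rw [dg]
    obtain ⟨T, hT, N, hN, hNQ⟩ := hn1 (Fin n) (KAdj s H) n (Fintype.card_fin n) (by omega)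
      (fun x y h => h.symm) (fun X Y hX hY => kfree hH hs hP X Y hX hY) hsum
      (degree_pow hk hH hs1 hs hP (Fintype.card_fin n) (by omega) hcon.le)
    have hNc : N.card + Nᶜ.card = n := by
      have := card_add_card_compl N
      rwa [Fintype.card_fin] at this
    have h2w : 2 * Nᶜ.card ≤ n := (Nat.mul_le_mul_right _ (by omega)).trans hNQ
    have := final_step hk hH ht hs1 hs hP T N hT hN (by omega) (by
      rw [Fintype.card_fin]
      exact final_ineq k _ s hk Q n _ _ hQ.ge hNQ hNc (by omega) (by omega))
    rw [hmeet T hT] at this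
    omega
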